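/- arXiv:1611.05482 — 2 statements merged into one kernel-verified Lean document; each statement's English description precedes it below -/
import Mathlib

section
/- For u_p = u(1^ω,(EERR)^ω) and k ≥ 5, the prefix w_{k+2} contains every factor of u_p of length at most |w_{k−5}|. -/
abbrev Word := List Bool

/-- The exchange antimorphism `E`: complement each letter and reverse. -/
def Ebar (w : Word) : Word := (w.map Bool.not).reverse

def IsPal (w : Word) : Prop := w.reverse = w
def IsEPal (w : Word) : Prop := Ebar w = w

open Classical in
lemma exists_minLength {Q : Word → Prop} (hex : ∃ v, Q v) :
    ∃ v, Q v ∧ ∀ v', Q v' → v.length ≤ v'.length := by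
  classical
  have h : ∃ n, ∃ v, Q v ∧ v.length = n := ⟨_, hex.choose, hex.choose_spec, rfl⟩
  obtain ⟨v, hv, hlen⟩ := Nat.find_spec h
  exact ⟨v, hv, fun v' hv' => by
    rw [hlen]; exact Nat.find_min' h ⟨v', hv', rfl⟩⟩

lemma pal_ext (w : Word) : ∃ v, w <+: v ∧ IsPal v :=
  ⟨w ++ w.reverse, List.prefix_append _ _, by simp [IsPal]⟩

lemma epal_ext (w : Word) : ∃ v, w <+: v ∧ IsEPal v :=
  ⟨w ++ Ebar w, List.prefix_append _ _, by
    simp [IsEPal, Ebar, List.map_reverse, List.map_map, Function.comp_def, Bool.not_not]⟩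

/-- The palindromic closure: the shortest palindrome having `w` as a prefix. -/
noncomputable def palCl (w : Word) : Word := (exists_minLength (pal_ext w)).choose

/-- The pseudopalindromic closure: the shortest `E`-palindrome having `w` as a prefix. -/
noncomputable def epalCl (w : Word) : Word := (exists_minLength (epal_ext w)).choose

/-- Prefixes of the generalized pseudostandard word `u(1^ω, (EERR)^ω)`
(the letter `1` is `true`). -/
noncomputable def wp : ℕ → Word
  | 0 => []
  | n+1 => if (n+1) % 4 = 1 ∨ (n+1) % 4 = 2
           then epalCl (wp n ++ [true])
           else palCl (wp n ++ [true])

/-- Factors of `u_p`. -/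
def FactorUp (v : Word) : Prop := ∃ n, v <:+: wp n

/-- Factor complexity of `u_p`. -/
noncomputable def Cp (n : ℕ) : ℕ := Set.ncard {v : Word | FactorUp v ∧ v.length = n}


def tyE (n : ℕ) : Bool := decide (n % 4 = 1 ∨ n % 4 = 2)

structure PSpec (u : ℕ → Bool) (L : ℕ → ℕ) : Prop where
  L0 : L 0 = 0
  lt : ∀ n, L n < L (n+1)
  ul : ∀ n, u (L n) = true
  pal : ∀ n i j, i + j + 1 = L n → u i = (tyE n ^^ u j)
  min : ∀ n c, L n ≤ c → c ≤ 2 * L n + 1 →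
    (∀ i j, i ≤ L n → j ≤ L n → i + j = c → u i = (tyE (n+1) ^^ u j)) → L (n+1) ≤ c + 1

def PP (u : ℕ → Bool) (b : Bool) (l : ℕ) : Prop := ∀ i j, i + j + 1 = l → u i = (b ^^ u j)

def CC (u : ℕ → Bool) (L : ℕ → ℕ) (n : ℕ) : Prop :=
  ∀ b l, l ≤ L n → PP u b l →
    (b = false ∧ (l = 1 ∨ l = 3)) ∨ ∃ j ≤ n, L j = l ∧ (j = 0 ∨ tyE j = b)

section
variable {u : ℕ → Bool} {L : ℕ → ℕ}

theorem refl_fwd {b b' : Bool} {N c : ℕ} (h : PP u b N) (hN : u N = true)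
    (h1 : N ≤ c) (h2 : c + 1 ≤ 2 * N)
    (h3 : ∀ i j, i ≤ N → j ≤ N → i + j = c → u i = (b' ^^ u j)) :
    PP u b' (2*N - c - 1) ∧ u (2*N-c-1) = !(b ^^ b') := by
  constructor
  · intro i j hij
    have e1 := h i (N - 1 - i) (by omega)
    have e2 := h j (N - 1 - j) (by omega)
    have e3 := h3 (N - 1 - i) (N - 1 - j) (by omega) (by omega) (by omega)
    rw [e1, e2, e3]
    cases b <;> cases b' <;> simp
  · have e1 := h (2*N-c-1) (c - N) (by omega)
    have e3 := h3 N (c - N) (by omega) (by omega) (by omega)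
    rw [hN] at e3
    rw [e1]
    revert e3
    cases b <;> cases b' <;> cases u (c - N) <;> simp

theorem refl_bwd {b b' : Bool} {N r : ℕ} (h : PP u b N) (hN : u N = true)
    (h1 : r < N) (h2 : PP u b' r) (h3 : u r = !(b ^^ b')) :
    ∀ i j, i ≤ N → j ≤ N → i + j = 2*N-r-1 → u i = (b' ^^ u j) := by
  have key : u (N - 1 - r) = (b' ^^ true) := by
    have e1 := h r (N-1-r) (by omega)
    rw [h3] at e1
    revert e1
    cases b <;> cases b' <;> cases u (N-1-r) <;> simp
  intro i j hi hj hij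
  rcases Nat.lt_or_ge i N with hi' | hi'
  · rcases Nat.lt_or_ge j N with hj' | hj'
    · have e1 := h i (N - 1 - i) (by omega)
      have e2 := h j (N - 1 - j) (by omega)
      have e3 := h2 (N - 1 - i) (N - 1 - j) (by omega)
      rw [e1, e2, e3]
      cases b <;> cases b' <;> simp
    · have : j = N := by omega
      subst this
      have : i = j - 1 - r := by omega
      rw [hN, this, key]
  · have : i = N := by omega
    subst this
    have : j = i - 1 - r := by omega
    rw [hN, this, key]
    cases b' <;> simp

theorem ty0 (m : ℕ) : tyE (4*m) = false := by unfold tyE; simp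
theorem ty1 (m : ℕ) : tyE (4*m+1) = true := by unfold tyE; simp
theorem ty2 (m : ℕ) : tyE (4*m+2) = true := by unfold tyE; simp
theorem ty3 (m : ℕ) : tyE (4*m+3) = false := by unfold tyE; simp
theorem ty4 (m : ℕ) : tyE (4*m+4) = false := by unfold tyE; simp
theorem tyT {j : ℕ} (h : tyE j = true) : j % 4 = 1 ∨ j % 4 = 2 := by
  unfold tyE at h; simpa using h
theorem tyF {j : ℕ} (h : tyE j = false) : j % 4 = 0 ∨ j % 4 = 3 := by
  unfold tyE at h; simp at h; omega

theorem PSpec.mono (S : PSpec u L) : StrictMono L := strictMono_nat_of_lt_succ S.lt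

theorem PSpec.le2 (S : PSpec u L) (n : ℕ) : L (n+1) ≤ 2 * L n + 2 :=
  S.min n (2 * L n + 1) (by omega) (by omega) (fun i j _ _ _ => by omega)

theorem PSpec.u0 (S : PSpec u L) : u 0 = true := by
  have := S.ul 0; rwa [S.L0] at this

theorem PSpec.L1 (S : PSpec u L) : L 1 = 2 := by
  have h1 := S.le2 0
  have h2 := S.lt 0
  have h0 := S.L0
  by_contra hne
  have h3 : L 1 = 1 := by simp only [Nat.zero_add] at *; omega
  have := S.pal 1 0 0 (by omega)
  rw [show tyE 1 = true from ty1 0, S.u0] at this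
  simp at this

theorem PSpec.u1 (S : PSpec u L) : u 1 = false := by
  have := S.pal 1 1 0 (by rw [S.L1])
  rw [show tyE 1 = true from ty1 0, S.u0] at this
  simpa using this

theorem PSpec.u2 (S : PSpec u L) : u 2 = true := by
  have := S.ul 1; rwa [S.L1] at this

theorem PSpec.L2 (S : PSpec u L) : L 2 = 4 := by
  have h1 := S.L1
  have h2 := S.lt 1
  have h3 : L 2 ≤ 4 := by
    refine S.min 1 3 (by omega) (by omega) ?_
    intro i j hi hj hij
    rw [show tyE (1+1) = true from ty2 0]
    have : (i = 1 ∧ j = 2) ∨ (i = 2 ∧ j = 1) := by omega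
    rcases this with ⟨rfl, rfl⟩ | ⟨rfl, rfl⟩ <;> simp [S.u1, S.u2]
  by_contra hne
  have h4 : L 2 = 3 := by simp only [Nat.reduceAdd] at *; omega
  have := S.pal 2 1 1 (by omega)
  rw [show tyE 2 = true from ty2 0] at this
  simp at this

theorem PSpec.u3 (S : PSpec u L) : u 3 = false := by
  have := S.pal 2 3 0 (by rw [S.L2])
  rw [show tyE 2 = true from ty2 0, S.u0] at this
  simpa using this

theorem PSpec.cT (S : PSpec u L) {n : ℕ} (C : CC u L n) {b : Bool} {r : ℕ} (hr : r < L n)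
    (hp : PP u b r) (hu : u r = true) : ∃ j < n, L j = r ∧ (j = 0 ∨ tyE j = b) := by
  rcases C b r hr.le hp with ⟨_, h | h⟩ | ⟨j, hj, h1, h2⟩
  · rw [h, S.u1] at hu; simp at hu
  · rw [h, S.u3] at hu; simp at hu
  · refine ⟨j, ?_, h1, h2⟩
    rw [← h1] at hr
    exact S.mono.lt_iff_lt.1 hr

theorem PSpec.cF (S : PSpec u L) {n : ℕ} (C : CC u L n) {b : Bool} {r : ℕ} (hr : r < L n)
    (hp : PP u b r) (hu : u r = false) : b = false ∧ (r = 1 ∨ r = 3) := by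
  rcases C b r hr.le hp with h | ⟨j, hj, h1, h2⟩
  · exact h
  · rw [← h1, S.ul] at hu; simp at hu

theorem PSpec.CCsucc (S : PSpec u L) {n : ℕ} {b : Bool} (C : CC u L n) (hb : tyE (n+1) = b)
    (H : ∀ l, L n < l → l < L (n+1) → PP u (!b) l → b = true ∧ (l = 1 ∨ l = 3)) :
    CC u L (n+1) := by
  intro b' l hl hp
  rcases Nat.lt_or_ge (L n) l with h | h
  · by_cases hbb : b' = b
    · right
      refine ⟨n+1, le_rfl, ?_, Or.inr (hb.trans hbb.symm)⟩
      have h2 := S.le2 n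
      have := S.min n (l-1) (by omega) (by omega) (by
        intro i j _ _ hij
        rw [hb, ← hbb]
        exact hp i j (by omega))
      omega
    · have hbb' : b' = !b := by revert hbb; cases b <;> cases b' <;> simp
      rcases Nat.lt_or_ge l (L (n+1)) with h' | h'
      · left
        obtain ⟨h3, h4⟩ := H l h h' (hbb' ▸ hp)
        refine ⟨?_, h4⟩
        rw [hbb', h3]; rfl
      · exfalso
        have hl' : l = L (n+1) := by omega
        have e1 := hp 0 (l-1) (by omega)
        have e2 := S.pal (n+1) 0 (l-1) (by omega)
        rw [e1, hb, hbb'] at e2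
        revert e2
        cases b <;> cases u (l-1) <;> simp
  · rcases C b' l h hp with h' | ⟨j, hj, h1⟩
    · exact Or.inl h'
    · exact Or.inr ⟨j, by omega, h1⟩

theorem PSpec.PPn (S : PSpec u L) {n : ℕ} {b : Bool} (hb : tyE n = b) : PP u b (L n) := by
  intro i j h
  rw [← hb]; exact S.pal n i j h

/-- reflected data of a pseudopalindromic prefix longer than `w_n` -/
theorem PSpec.reflP (S : PSpec u L) {n : ℕ} {b b' : Bool} (hb : tyE n = b) {l : ℕ}
    (h1 : L n < l) (h2 : l ≤ 2 * L n) (hp : PP u b' l) :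
    PP u b' (2 * L n - l) ∧ u (2 * L n - l) = !(b ^^ b') := by
  have := refl_fwd (b' := b') (c := l - 1) (S.PPn hb) (S.ul n) (by omega) (by omega)
    (fun i j _ _ hij => hp i j (by omega))
  rwa [show 2 * L n - (l-1) - 1 = 2 * L n - l by omega] at this

theorem PSpec.upper (S : PSpec u L) {n r : ℕ} {b b' : Bool} (hb : tyE n = b)
    (hb' : tyE (n+1) = b') (h1 : r < L n) (h2 : PP u b' r) (h3 : u r = !(b ^^ b')) :
    L (n+1) + r ≤ 2 * L n := by
  have := S.min n (2 * L n - r - 1) (by omega) (by omega) (by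
    rw [hb']
    exact refl_bwd (S.PPn hb) (S.ul n) h1 h2 h3)
  omega

theorem PSpec.s1 (S : PSpec u L) (m : ℕ) (C : CC u L (4*m)) : L (4*m+1) = 2 * L (4*m) + 2 := by
  have h1 := S.le2 (4*m)
  have h2 := S.lt (4*m)
  by_contra hne
  rcases Nat.lt_or_ge (2 * L (4*m)) (L (4*m+1)) with h | h
  · have := S.pal (4*m+1) (L (4*m)) (L (4*m)) (by omega)
    rw [ty1] at this
    simp at this
  · obtain ⟨e1, e2⟩ := S.reflP (ty0 m) h2 h (S.PPn (ty1 m))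
    have := S.cF C (by omega) e1 (by simpa using e2)
    simp at this

theorem PSpec.s1C (S : PSpec u L) (m : ℕ) (C : CC u L (4*m))
    (R1 : ∀ i ≤ m, L (4*i+1) = 2 * L (4*i) + 2)
    (R4 : ∀ i < m, L (4*i+4) + L (4*i) = 2 * L (4*i+3)) : CC u L (4*m+1) := by
  refine S.CCsucc C (ty1 m) ?_
  intro l h1 h2 hp
  simp only [Bool.not_true] at hp
  have e := R1 m le_rfl
  have hu := S.ul (4*m)
  have hE : ∀ t, t < L (4*m) → u (L (4*m) + 2 + t) = !u t := by
    intro t ht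
    have a1 := S.pal (4*m+1) (L (4*m) + 2 + t) (L (4*m) - 1 - t) (by omega)
    have a2 := S.pal (4*m) t (L (4*m) - 1 - t) (by omega)
    rw [a1, a2, ty0, ty1]; simp
  rcases Nat.lt_or_ge (2 * L (4*m)) l with h | h
  · refine ⟨rfl, ?_⟩
    rcases Nat.eq_zero_or_pos (L (4*m)) with h0 | h0
    · left; omega
    · exfalso
      have a1 := S.pal (4*m+1) (L (4*m) + 1) (L (4*m)) (by omega)
      have a2 := hp (L (4*m) + 1) (L (4*m) - 1) (by omega)
      have a3 := S.pal (4*m) (L (4*m) - 1) 0 (by omega)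
      rw [a1, a3, S.u0, hu, ty0, ty1] at a2
      simp at a2
  · exfalso
    obtain ⟨e1, e2⟩ := S.reflP (ty0 m) h1 h hp
    obtain ⟨j, hj, hj1, hj2⟩ := S.cT C (by omega) e1 (by simpa using e2)
    have hT : ∀ t, L j + t < L (4*m) → u (L (4*m) + t) = u (L j + t) := by
      intro t ht
      have a1 := hp (L (4*m) + t) (L (4*m) - 1 - L j - t) (by omega)
      have a2 := S.pal (4*m) (L j + t) (L (4*m) - 1 - L j - t) (by omega)
      rw [a1, a2, ty0]
    have hj3 : j % 4 = 0 ∨ j % 4 = 3 := by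
      rcases hj2 with h | h
      · omega
      · exact tyF h
    rcases hj3 with h3 | h3
    · obtain ⟨i, rfl⟩ : ∃ i, j = 4*i := ⟨j/4, by omega⟩
      have b0 := R1 i (by omega)
      have b1 : L (4*i+1) < L (4*m) := S.mono (by omega)
      have a1 := hT (2 + L (4*i)) (by omega)
      have a2 := hE (L (4*i)) (by omega)
      rw [← Nat.add_assoc, a2, show L (4*i) + (2 + L (4*i)) = L (4*i+1) by omega,
        S.ul, S.ul] at a1
      simp at a1
    · obtain ⟨i, rfl⟩ : ∃ i, j = 4*i+3 := ⟨j/4, by omega⟩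
      have b0 := R1 i (by omega)
      have b4 := R4 i (by omega)
      have b1 : L (4*i+1) < L (4*i+3) := S.mono (by omega)
      have b2 : L (4*i+4) ≤ L (4*m) := S.mono.monotone (by omega)
      have a1 := hT (2 + L (4*i)) (by omega)
      have a2 := hE (L (4*i)) (by omega)
      have a3 := S.pal (4*i+4) (L (4*i+3) + (2 + L (4*i)))
        (L (4*i+4) - 1 - (L (4*i+3) + (2 + L (4*i)))) (by omega)
      have a4 := S.pal (4*i+3) (L (4*i+1))
        (L (4*i+4) - 1 - (L (4*i+3) + (2 + L (4*i)))) (by omega)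
      rw [ty4] at a3
      rw [ty3, S.ul] at a4
      rw [← Nat.add_assoc, a2, a3, ← a4, S.ul] at a1
      simp at a1

theorem PSpec.s2 (S : PSpec u L) (m : ℕ) (C : CC u L (4*m+5)) :
    L (4*m+6) + L (4*m+2) = 2 * L (4*m+5) := by
  have t5 : tyE (4*m+5) = true := ty1 (m+1)
  have t6 : tyE (4*m+5+1) = true := ty2 (m+1)
  have h0 : L (4*m+2) < L (4*m+5) := S.mono (by omega)
  have h1 := S.upper t5 t6 h0 (S.PPn (ty2 m)) (by rw [S.ul]; rfl)
  have h2 := S.lt (4*m+5)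
  obtain ⟨e1, e2⟩ := S.reflP t5 h2 (by omega) (S.PPn t6)
  obtain ⟨j, hj, hj1, hj2⟩ := S.cT C (by omega) e1 (by simpa using e2)
  have : j ≤ 4*m+2 := by
    rcases hj2 with h | h
    · omega
    · have := tyT h; omega
  have := S.mono.monotone this
  simp only [Nat.add_assoc, Nat.reduceAdd] at *
  omega

theorem PSpec.s2C (S : PSpec u L) (m : ℕ) (C : CC u L (4*m+5))
    (R2 : L (4*m+6) + L (4*m+2) = 2 * L (4*m+5)) : CC u L (4*m+6) := by
  have t5 : tyE (4*m+5) = true := ty1 (m+1)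
  have t6 : tyE (4*m+5+1) = true := ty2 (m+1)
  refine S.CCsucc C t6 ?_
  intro l h1 h2 hp
  exfalso
  simp only [Nat.add_assoc, Nat.reduceAdd] at *
  obtain ⟨e1, e2⟩ := S.reflP t5 h1 (by omega) hp
  have b : L 2 ≤ L (4*m+2) := S.mono.monotone (by omega)
  rw [S.L2] at b
  have := S.cF C (by omega) e1 (by simpa using e2)
  omega

theorem PSpec.PP3 (S : PSpec u L) : PP u false 3 := by
  intro i j h
  have : (i = 0 ∧ j = 2) ∨ (i = 1 ∧ j = 1) ∨ (i = 2 ∧ j = 0) := by omega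
  rcases this with ⟨rfl, rfl⟩ | ⟨rfl, rfl⟩ | ⟨rfl, rfl⟩ <;> simp [S.u0, S.u1, S.u2]

theorem PSpec.s3 (S : PSpec u L) (m : ℕ) (C : CC u L (4*m+2)) :
    L (4*m+3) + 3 = 2 * L (4*m+2) := by
  have b : L 2 ≤ L (4*m+2) := S.mono.monotone (by omega)
  rw [S.L2] at b
  have h1 := S.upper (ty2 m) (ty3 m) (by omega) S.PP3 (by rw [S.u3]; rfl)
  have h2 := S.lt (4*m+2)
  obtain ⟨e1, e2⟩ := S.reflP (ty2 m) h2 (by omega) (S.PPn (ty3 m))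
  have := S.cF C (by omega) e1 (by simpa using e2)
  simp only [Nat.add_assoc, Nat.reduceAdd] at *
  omega

theorem PSpec.s3C (S : PSpec u L) (m : ℕ) (C : CC u L (4*m+2))
    (R2 : ∀ i, i < m → L (4*i+6) + L (4*i+2) = 2 * L (4*i+5))
    (R3 : ∀ i ≤ m, L (4*i+3) + 3 = 2 * L (4*i+2)) : CC u L (4*m+3) := by
  refine S.CCsucc C (ty3 m) ?_
  intro l h1 h2 hp
  exfalso
  simp only [Bool.not_false] at hp
  have e := R3 m le_rfl
  simp only [Nat.add_assoc, Nat.reduceAdd] at *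
  obtain ⟨e1, e2⟩ := S.reflP (ty2 m) h1 (by omega) hp
  obtain ⟨j, hj, hj1, hj2⟩ := S.cT C (by omega) e1 (by simpa using e2)
  have hE : ∀ t, t + 3 < L (4*m+2) → u (L (4*m+2) + t) = !u (t + 3) := by
    intro t ht
    have a1 := S.pal (4*m+3) (L (4*m+2) + t) (L (4*m+2) - 4 - t) (by omega)
    have a2 := S.pal (4*m+2) (t+3) (L (4*m+2) - 4 - t) (by omega)
    rw [a1, a2, ty2, ty3]; simp
  have hT : ∀ t, L j + t < L (4*m+2) → u (L (4*m+2) + t) = u (L j + t) := by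
    intro t ht
    have a1 := hp (L (4*m+2) + t) (L (4*m+2) - 1 - L j - t) (by omega)
    have a2 := S.pal (4*m+2) (L j + t) (L (4*m+2) - 1 - L j - t) (by omega)
    rw [a1, a2, ty2]
  have hj0 : j ≠ 0 := by
    rintro rfl
    have := S.L0
    omega
  have hj4 : j ≠ 1 := by
    rintro rfl
    have := S.L1
    omega
  rcases tyT (hj2.resolve_left hj0) with h3 | h3
  · obtain ⟨i, rfl⟩ : ∃ i, j = 4*i+5 := ⟨(j-5)/4, by omega⟩
    have b2 := R2 i (by omega)
    have b3 := R3 i (by omega)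
    have b4 : L (4*i+3) < L (4*i+5) := S.mono (by omega)
    have b5 : L (4*i+6) ≤ L (4*m+2) := S.mono.monotone (by omega)
    have b6 : L 2 ≤ L (4*i+2) := S.mono.monotone (by omega)
    rw [S.L2] at b6
    have t5 : tyE (4*i+5) = true := ty1 (i+1)
    have t6 : tyE (4*i+6) = true := ty2 (i+1)
    have a1 := hT (L (4*i+2) - 3) (by omega)
    have a2 := hE (L (4*i+2) - 3) (by omega)
    have a3 := S.pal (4*i+6) (L (4*i+5) + (L (4*i+2) - 3))
      (L (4*i+6) - 1 - (L (4*i+5) + (L (4*i+2) - 3))) (by omega)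
    have a4 := S.pal (4*i+5) (L (4*i+3))
      (L (4*i+6) - 1 - (L (4*i+5) + (L (4*i+2) - 3))) (by omega)
    rw [S.ul, t5] at a4
    rw [t6] at a3
    rw [a2, a3, ← a4, show L (4*i+2) - 3 + 3 = L (4*i+2) by omega, S.ul] at a1
    simp at a1
  · obtain ⟨i, rfl⟩ : ∃ i, j = 4*i+2 := ⟨j/4, by omega⟩
    have b3 := R3 i (by omega)
    have b4 : L (4*i+3) < L (4*m+2) := S.mono (by omega)
    have b6 : L 2 ≤ L (4*i+2) := S.mono.monotone (by omega)
    rw [S.L2] at b6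
    have a1 := hT (L (4*i+2) - 3) (by omega)
    have a2 := hE (L (4*i+2) - 3) (by omega)
    rw [a2, show L (4*i+2) - 3 + 3 = L (4*i+2) by omega,
      show L (4*i+2) + (L (4*i+2) - 3) = L (4*i+3) by omega, S.ul, S.ul] at a1
    simp at a1

theorem PSpec.s4 (S : PSpec u L) (m : ℕ) (C : CC u L (4*m+3)) :
    L (4*m+4) + L (4*m) = 2 * L (4*m+3) := by
  have h0 : L (4*m) < L (4*m+3) := S.mono (by omega)
  have h1 := S.upper (ty3 m) (ty4 m) h0 (S.PPn (ty0 m)) (by rw [S.ul]; rfl)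
  have h2 := S.lt (4*m+3)
  obtain ⟨e1, e2⟩ := S.reflP (ty3 m) h2 (by omega) (S.PPn (ty4 m))
  obtain ⟨j, hj, hj1, hj2⟩ := S.cT C (by omega) e1 (by simpa using e2)
  have : j ≤ 4*m := by
    rcases hj2 with h | h
    · omega
    · have := tyF h; omega
  have := S.mono.monotone this
  simp only [Nat.add_assoc, Nat.reduceAdd] at *
  omega

theorem PSpec.s4C (S : PSpec u L) (m : ℕ) (C : CC u L (4*m+3))
    (R4 : L (4*m+4) + L (4*m) = 2 * L (4*m+3)) : CC u L (4*m+4) := by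
  refine S.CCsucc C (ty4 m) ?_
  intro l h1 h2 hp
  exfalso
  simp only [Nat.add_assoc, Nat.reduceAdd] at *
  obtain ⟨e1, e2⟩ := S.reflP (ty3 m) h1 (by omega) hp
  have := S.cF C (by omega) e1 (by simpa using e2)
  simp at this

theorem PSpec.C2 (S : PSpec u L) (C : CC u L 1) : CC u L 2 := by
  refine S.CCsucc C (ty2 0) ?_
  intro l h1 h2 hp
  have := S.L1
  have := S.L2
  have h2' : l < L 2 := h2
  have h1' : L 1 < l := h1
  exact ⟨rfl, by omega⟩

theorem PSpec.inv (S : PSpec u L) (m : ℕ) : CC u L (4*m) ∧ ∀ i < m,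
    L (4*i+1) = 2 * L (4*i) + 2 ∧ (∀ i', i = i' + 1 → L (4*i'+6) + L (4*i'+2) = 2 * L (4*i'+5)) ∧
    L (4*i+3) + 3 = 2 * L (4*i+2) ∧ L (4*i+4) + L (4*i) = 2 * L (4*i+3) := by
  induction m with
  | zero =>
    refine ⟨?_, by omega⟩
    intro b l hl _
    rw [Nat.mul_zero, S.L0] at hl
    exact Or.inr ⟨0, by omega, by rw [S.L0]; omega, Or.inl rfl⟩
  | succ m ih =>
    obtain ⟨C0, R⟩ := ih
    have r1 := S.s1 m C0
    have C1 : CC u L (4*m+1) := S.s1C m C0 (by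
      intro i hi
      rcases Nat.lt_or_ge i m with h | h
      · exact (R i h).1
      · obtain rfl : i = m := by omega
        exact r1) (fun i hi => (R i hi).2.2.2)
    have r2 : (∀ i', m = i' + 1 → L (4*i'+6) + L (4*i'+2) = 2 * L (4*i'+5)) := by
      rintro i rfl
      exact S.s2 i C1
    have C2 : CC u L (4*m+2) := by
      rcases m with _ | i
      · exact S.C2 C1
      · exact S.s2C i C1 (r2 i rfl)
    have r3 := S.s3 m C2
    have C3 : CC u L (4*m+3) := S.s3C m C2 (by
      intro i hi
      rcases Nat.lt_or_ge (i+1) m with h | h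
      · exact (R (i+1) h).2.1 i rfl
      · exact r2 i (by omega)) (by
      intro i hi
      rcases Nat.lt_or_ge i m with h | h
      · exact (R i h).2.2.1
      · obtain rfl : i = m := by omega
        exact r3)
    have r4 := S.s4 m C3
    have C4 := S.s4C m C3 r4
    refine ⟨C4, ?_⟩
    intro i hi
    rcases Nat.lt_or_ge i m with h | h
    · exact R i h
    · obtain rfl : i = m := by omega
      exact ⟨r1, r2, r3, r4⟩

theorem PSpec.R1 (S : PSpec u L) (i : ℕ) : L (4*i+1) = 2 * L (4*i) + 2 :=
  ((S.inv (i+1)).2 i (by omega)).1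
theorem PSpec.R2 (S : PSpec u L) (i : ℕ) : L (4*i+6) + L (4*i+2) = 2 * L (4*i+5) :=
  ((S.inv (i+2)).2 (i+1) (by omega)).2.1 i rfl
theorem PSpec.R3 (S : PSpec u L) (i : ℕ) : L (4*i+3) + 3 = 2 * L (4*i+2) :=
  ((S.inv (i+1)).2 i (by omega)).2.2.1
theorem PSpec.R4 (S : PSpec u L) (i : ℕ) : L (4*i+4) + L (4*i) = 2 * L (4*i+3) :=
  ((S.inv (i+1)).2 i (by omega)).2.2.2

/-- Occurrence inside the prefix of length `K`. -/
def Occ (u : ℕ → Bool) (K M : ℕ) (f : ℕ → Bool) : Prop :=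
  ∃ b, b + M ≤ K ∧ ∀ i < M, u (b + i) = f i

def Good (u : ℕ → Bool) (K M a : ℕ) : Prop :=
  ∀ e : Bool, Occ u K M (fun i => e ^^ u (a + i)) ∧ Occ u K M (fun i => e ^^ u (a + (M - 1 - i)))

theorem Good.reflect {K M a a' : ℕ} {b : Bool} (h : Good u K M a')
    (hr : ∀ i < M, u (a + i) = (b ^^ u (a' + (M - 1 - i)))) : Good u K M a := by
  intro e
  constructor
  · obtain ⟨x, hx, hx'⟩ := (h (e ^^ b)).2
    refine ⟨x, hx, fun i hi => ?_⟩
    rw [hx' i hi]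
    simp only [hr i hi]
    cases e <;> cases b <;> simp
  · obtain ⟨x, hx, hx'⟩ := (h (e ^^ b)).1
    refine ⟨x, hx, fun i hi => ?_⟩
    rw [hx' i hi]
    simp only [hr (M - 1 - i) (by omega)]
    rw [show M - 1 - (M - 1 - i) = i by omega]
    cases e <;> cases b <;> simp

theorem Good.congr {K M a a' : ℕ} (h : Good u K M a')
    (hr : ∀ i < M, u (a + i) = u (a' + i)) : Good u K M a := by
  intro e
  constructor
  · obtain ⟨x, hx, hx'⟩ := (h e).1
    refine ⟨x, hx, fun i hi => ?_⟩
    rw [hx' i hi]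
    simp only [hr i hi]
  · obtain ⟨x, hx, hx'⟩ := (h e).2
    refine ⟨x, hx, fun i hi => ?_⟩
    rw [hx' i hi]
    simp only [hr (M - 1 - i) (by omega)]

/-- reflection of a window in `w_n` -/
theorem PSpec.win (S : PSpec u L) {n M a : ℕ} {b : Bool} (hb : tyE n = b) (h : a + M ≤ L n) :
    ∀ i < M, u (L n - M - a + i) = (b ^^ u (a + (M - 1 - i))) := by
  intro i hi
  rw [← hb]
  exact S.pal n _ _ (by omega)

theorem PSpec.goodBase (S : PSpec u L) {e K M a : ℕ} {b : Bool} (hb : tyE e = b)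
    (hb' : tyE (e+1) = !b) (hK : L (e+1) ≤ K) (ha : a + M ≤ L e) : Good u K M a := by
  have hlt := S.lt e
  have w1 := S.win hb ha
  have w2 := S.win (a := a) (M := M) hb' (by omega)
  have w3 := S.win (a := L e - M - a) (M := M) hb' (by omega)
  have w3' : ∀ i < M, u (L (e+1) - M - (L e - M - a) + i) = !u (a + i) := by
    intro i hi
    rw [w3 i hi, w1 (M - 1 - i) (by omega), show M - 1 - (M - 1 - i) = i by omega]
    cases b <;> simp
  intro c
  constructor
  · cases c
    · exact ⟨a, by omega, fun i _ => by simp⟩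
    · exact ⟨L (e+1) - M - (L e - M - a), by omega, fun i hi => by rw [w3' i hi]; simp⟩
  · by_cases hc : c = b
    · exact ⟨L e - M - a, by omega, fun i hi => by rw [w1 i hi, hc]⟩
    · have hc' : c = !b := by revert hc; cases b <;> cases c <;> simp
      exact ⟨L (e+1) - M - a, by omega, fun i hi => by rw [w2 i hi, hc']⟩

theorem PSpec.main (S : PSpec u L) {k M : ℕ} (hk : 5 ≤ k) (hM : M ≤ L (k-5)) (n : ℕ) :
    ∀ a, a + M ≤ L (k - 1 + n) → Good u (L (k+2)) M a := by
  have base : ∀ a, a + M ≤ L (k-1) → Good u (L (k+2)) M a := by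
    intro a ha
    obtain ⟨e, b, he1, he2, hb, hb'⟩ : ∃ e b, k - 1 ≤ e ∧ e + 1 ≤ k + 2 ∧ tyE e = b ∧
        tyE (e+1) = !b := by
      have : k % 4 = 0 ∨ k % 4 = 1 ∨ k % 4 = 2 ∨ k % 4 = 3 := by omega
      rcases this with h | h | h | h
      · obtain ⟨i, rfl⟩ : ∃ i, k = 4*i := ⟨k/4, by omega⟩
        exact ⟨4*i, _, by omega, by omega, ty0 i, ty1 i⟩
      · obtain ⟨i, rfl⟩ : ∃ i, k = 4*i+1 := ⟨k/4, by omega⟩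
        exact ⟨4*i, _, by omega, by omega, ty0 i, ty1 i⟩
      · obtain ⟨i, rfl⟩ : ∃ i, k = 4*i+2 := ⟨k/4, by omega⟩
        exact ⟨4*i+2, _, by omega, by omega, ty2 i, ty3 i⟩
      · obtain ⟨i, rfl⟩ : ∃ i, k = 4*i+3 := ⟨k/4, by omega⟩
        exact ⟨4*i+2, _, by omega, by omega, ty2 i, ty3 i⟩
    have h1 := S.mono.monotone he1
    exact S.goodBase hb hb' (S.mono.monotone he2) (by omega)
  induction n with
  | zero => exact base
  | succ n ih =>
    intro a ha
    rw [← Nat.add_assoc] at ha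
    obtain ⟨N, hN⟩ : ∃ N, N = k - 1 + n := ⟨_, rfl⟩
    rw [← hN] at ih ha
    rcases Nat.lt_or_ge (L N) (a + M) with h1 | h1
    swap
    · exact ih a h1
    have hlt := S.lt N
    rcases Nat.lt_or_ge a (L (N+1) - L N) with h2 | h2
    swap
    · refine (ih (L (N+1) - M - a) (by omega)).reflect (b := tyE (N+1)) ?_
      have := S.win (n := N+1) (a := L (N+1) - M - a) (M := M) rfl (by omega)
      rwa [show L (N+1) - M - (L (N+1) - M - a) = a by omega] at this
    have : N % 4 = 0 ∨ N % 4 = 1 ∨ N % 4 = 2 ∨ N % 4 = 3 := by omega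
    rcases this with h | h | h | h
    · obtain ⟨m, rfl⟩ : ∃ i, N = 4*i := ⟨N/4, by omega⟩
      obtain ⟨q, hq1, hq2⟩ : ∃ q, k - 5 ≤ 4*q ∧ 4*q+1 ≤ k - 1 := ⟨(k-2)/4, by omega⟩
      have g1 := S.mono.monotone hq1
      have g2 := S.mono.monotone hq2
      have g3 := S.R1 q
      have g4 := S.R1 m
      have g5 : L (4*q) ≤ L (4*m) := S.mono.monotone (by omega)
      refine (base (a - (L (4*m) - L (4*q))) (by omega)).congr ?_
      have lo : ∀ x, x < L (4*q) → u (L (4*m) - L (4*q) + x) = u x := by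
        intro x hx
        have a1 := S.pal (4*m) (L (4*m) - L (4*q) + x) (L (4*q) - 1 - x) (by omega)
        have a2 := S.pal (4*q) x (L (4*q) - 1 - x) (by omega)
        rw [a1, a2, ty0, ty0]
      have lo' : ∀ x, x ≤ L (4*q) → u (L (4*m) - L (4*q) + x) = u x := by
        intro x hx
        rcases Nat.lt_or_ge x (L (4*q)) with hx' | hx'
        · exact lo x hx'
        · obtain rfl : x = L (4*q) := by omega
          rw [show L (4*m) - L (4*q) + L (4*q) = L (4*m) by omega, S.ul, S.ul]
      intro i hi
      obtain ⟨x, hx⟩ : ∃ x, x = a - (L (4*m) - L (4*q)) + i := ⟨_, rfl⟩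
      rw [show a + i = L (4*m) - L (4*q) + x by omega, ← hx]
      rcases Nat.lt_or_ge (L (4*q)) x with hx' | hx'
      · have a1 := S.pal (4*m+1) (L (4*m) - L (4*q) + x)
          (L (4*m) - L (4*q) + (2 * L (4*q) + 1 - x)) (by omega)
        have a2 := S.pal (4*q+1) x (2 * L (4*q) + 1 - x) (by omega)
        rw [a1, a2, ty1, ty1, lo' _ (by omega)]
      · exact lo' x hx'
    · obtain ⟨m, rfl⟩ : ∃ i, N = 4*i+5 := ⟨(N-5)/4, by omega⟩
      exfalso
      have g1 := S.R2 m
      have g2 : L (k-5) ≤ L (4*m+2) := S.mono.monotone (by omega)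
      simp only [Nat.add_assoc, Nat.reduceAdd] at *
      omega
    · obtain ⟨m, rfl⟩ : ∃ i, N = 4*i+2 := ⟨N/4, by omega⟩
      obtain ⟨q, hq1, hq2⟩ : ∃ q, k - 5 ≤ 4*q+2 ∧ 4*q+2+1 ≤ k - 1 := ⟨(k-4)/4, by omega⟩
      have g1 := S.mono.monotone hq1
      have g2 := S.mono.monotone hq2
      have g3 := S.R3 q
      have g4 := S.R3 m
      have g5 : L (4*q+2) ≤ L (4*m+2) := S.mono.monotone (by omega)
      simp only [Nat.add_assoc, Nat.reduceAdd] at *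
      refine (base (a - (L (4*m+2) - L (4*q+2))) (by omega)).congr ?_
      have lo : ∀ x, x < L (4*q+2) → u (L (4*m+2) - L (4*q+2) + x) = u x := by
        intro x hx
        have a1 := S.pal (4*m+2) (L (4*m+2) - L (4*q+2) + x) (L (4*q+2) - 1 - x) (by omega)
        have a2 := S.pal (4*q+2) x (L (4*q+2) - 1 - x) (by omega)
        rw [a1, a2, ty2, ty2]
      intro i hi
      obtain ⟨x, hx⟩ : ∃ x, x = a - (L (4*m+2) - L (4*q+2)) + i := ⟨_, rfl⟩
      rw [show a + i = L (4*m+2) - L (4*q+2) + x by omega, ← hx]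
      rcases Nat.lt_or_ge x (L (4*q+2)) with hx' | hx'
      · exact lo x hx'
      · have a1 := S.pal (4*m+3) (L (4*m+2) - L (4*q+2) + x)
          (L (4*m+2) - L (4*q+2) + (2 * L (4*q+2) - 4 - x)) (by omega)
        have a2 := S.pal (4*q+3) x (2 * L (4*q+2) - 4 - x) (by omega)
        rw [a1, a2, ty3, ty3, lo _ (by omega)]
    · obtain ⟨m, rfl⟩ : ∃ i, N = 4*i+3 := ⟨N/4, by omega⟩
      exfalso
      have g1 := S.R4 m
      have g2 : L (k-5) ≤ L (4*m) := S.mono.monotone (by omega)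
      simp only [Nat.add_assoc, Nat.reduceAdd] at *
      omega

end

/-! ### Lists -/

def anti (b : Bool) (w : Word) : Word := (w.map (fun x => b ^^ x)).reverse

theorem anti_false (w : Word) : anti false w = w.reverse := by simp [anti]
theorem anti_true (w : Word) : anti true w = Ebar w := by
  unfold anti Ebar
  congr 2
  funext x
  simp

theorem anti_append (b : Bool) (x y : Word) : anti b (x ++ y) = anti b y ++ anti b x := by
  simp [anti]

theorem anti_anti (b : Bool) (x : Word) : anti b (anti b x) = x := by
  simp [anti, Function.comp_def]

theorem anti_length (b : Bool) (x : Word) : (anti b x).length = x.length := by simp [anti]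

theorem anti_iff (b : Bool) (w : Word) : anti b w = w ↔
    ∀ i j, i + j + 1 = w.length → w.getD i false = (b ^^ w.getD j false) := by
  constructor
  · intro h i j hij
    have hi : i < w.length := by omega
    have hj : j < w.length := by omega
    have : (anti b w).getD i false = w.getD i false := by rw [h]
    rw [← this]
    simp only [anti, List.getD_eq_getElem?_getD]
    rw [List.getElem?_reverse (by simpa using hi)]
    simp only [List.length_map, List.getElem?_map]
    rw [show w.length - 1 - i = j by omega]
    simp [hj]
  · intro h
    apply List.ext_getElem
    · simp [anti]
    · intro i h1 h2
      have := h i (w.length - 1 - i) (by omega)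
      rw [List.getD_eq_getElem _ _ h2, List.getD_eq_getElem _ _ (by omega)] at this
      rw [this]
      simp [anti]

theorem wp_spec (n : ℕ) : (wp n ++ [true]) <+: wp (n+1) ∧ anti (tyE (n+1)) (wp (n+1)) = wp (n+1) ∧
    ∀ v, (wp n ++ [true]) <+: v → anti (tyE (n+1)) v = v → (wp (n+1)).length ≤ v.length := by
  by_cases h : (n+1) % 4 = 1 ∨ (n+1) % 4 = 2
  · have e : wp (n+1) = epalCl (wp n ++ [true]) := by rw [wp, if_pos h]
    have t : tyE (n+1) = true := by unfold tyE; simpa using h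
    rw [t, e]
    simp only [anti_true]
    have := (exists_minLength (epal_ext (wp n ++ [true]))).choose_spec
    exact ⟨this.1.1, this.1.2, fun v h1 h2 => this.2 v ⟨h1, h2⟩⟩
  · have e : wp (n+1) = palCl (wp n ++ [true]) := by rw [wp, if_neg h]
    have t : tyE (n+1) = false := by unfold tyE; simpa using h
    rw [t, e]
    simp only [anti_false]
    have := (exists_minLength (pal_ext (wp n ++ [true]))).choose_spec
    exact ⟨this.1.1, this.1.2, fun v h1 h2 => this.2 v ⟨h1, h2⟩⟩

noncomputable def uw (i : ℕ) : Bool := (wp (i+1)).getD i false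

theorem wp_len_lt (n : ℕ) : (wp n).length < (wp (n+1)).length := by
  have := (wp_spec n).1.length_le
  simp at this
  omega

theorem wp_prefix {m n : ℕ} (h : m ≤ n) : wp m <+: wp n := by
  induction n, h using Nat.le_induction with
  | base => exact List.prefix_refl _
  | succ n _ ih => exact ih.trans ((List.prefix_append _ _).trans (wp_spec n).1)

theorem wp_len_ge (n : ℕ) : n ≤ (wp n).length := by
  induction n with
  | zero => omega
  | succ n ih => have := wp_len_lt n; omega

theorem prefix_getD {x y : Word} (h : x <+: y) {i : ℕ} (hi : i < x.length) :
    y.getD i false = x.getD i false := by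
  obtain ⟨z, rfl⟩ := h
  exact List.getD_append _ _ _ _ hi

theorem wp_getD {n i : ℕ} (h : i < (wp n).length) : (wp n).getD i false = uw i := by
  have h2 : i < (wp (i+1)).length := by have := wp_len_ge (i+1); omega
  unfold uw
  rcases Nat.le_total n (i+1) with h1 | h1
  · exact (prefix_getD (wp_prefix h1) h).symm
  · exact prefix_getD (wp_prefix h1) h2

theorem wp_getD' {n i : ℕ} (h : i ≤ (wp n).length) : (wp n ++ [true]).getD i false = uw i := by
  rw [← wp_getD (n := n+1) (by have := wp_len_lt n; omega)]
  exact (prefix_getD (wp_spec n).1 (by simp; omega)).symm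

theorem wp_PSpec : PSpec uw (fun n => (wp n).length) where
  L0 := by simp [wp]
  lt := wp_len_lt
  ul := by
    intro n
    rw [← wp_getD' le_rfl]
    simp
  pal := by
    intro n i j h
    cases n with
    | zero => simp [wp] at h
    | succ n =>
      have := (anti_iff _ _).1 (wp_spec n).2.1 i j h
      rwa [wp_getD (by omega), wp_getD (by omega)] at this
  min := by
    intro n c h1 h2 h3
    obtain ⟨x, s, hxs, hx⟩ : ∃ x s, wp n ++ [true] = x ++ s ∧ x.length = c - (wp n).length :=
      ⟨_, _, (List.take_append_drop (c - (wp n).length) (wp n ++ [true])).symm, by simp; omega⟩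
    have hl : (wp n).length + 1 = x.length + s.length := by
      have := congrArg List.length hxs
      simpa using this
    have hs : anti (tyE (n+1)) s = s := by
      rw [anti_iff]
      intro i j hij
      have a1 : ∀ t, s.getD t false = (wp n ++ [true]).getD (x.length + t) false := by
        intro t
        rw [hxs, List.getD_append_right _ _ _ _ (by omega)]
        congr 1
        omega
      rw [a1, a1, wp_getD' (by omega), wp_getD' (by omega)]
      exact h3 _ _ (by omega) (by omega) (by omega)
    have := (wp_spec n).2.2 (wp n ++ [true] ++ anti (tyE (n+1)) x) (List.prefix_append _ _) (by
      rw [anti_append, anti_anti, hxs, anti_append, hs, List.append_assoc])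
    simp [anti_length] at this
    omega

/-- for `k ≥ 5`, the prefix `w_{k+2}` contains every factor of `u_p`
of length at most `|w_{k-5}|`. -/
theorem prefix_contains_all_short_factors (k : ℕ) (hk : 5 ≤ k) :
    ∀ v : Word, FactorUp v → v.length ≤ (wp (k-5)).length → v <:+: wp (k+2) := by
  rintro v ⟨n, s, t, hst⟩ hv
  have hlen : s.length + v.length + t.length = (wp n).length := by
    have := congrArg List.length hst
    simpa [Nat.add_assoc] using this
  have hle : (wp n).length ≤ (wp (k - 1 + n)).length := (wp_prefix (by omega)).length_le
  obtain ⟨b, hb, hb'⟩ := (wp_PSpec.main hk hv n s.length (by omega) false).1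
  have : v = ((wp (k+2)).drop b).take v.length := by
    apply List.ext_getElem
    · simp; omega
    · intro i h1 h2
      have e : uw (b + i) = uw (s.length + i) := by simpa using hb' i h1
      rw [← wp_getD (n := k+2) (by omega), ← wp_getD (n := n) (by omega),
        List.getD_eq_getElem _ _ (by omega), List.getD_eq_getElem _ _ (by omega)] at e
      simp only [← hst] at e
      simp only [List.getElem_take, List.getElem_drop]
      rw [e]
      simp [List.getElem_append, h1]
  rw [this]
  exact (List.take_prefix _ _).isInfix.trans (List.drop_suffix _ _).isInfix
end

section
/- For u_p = u(1^ω,(EERR)^ω) and every n ∈ ℕ, the second difference of factor complexity satisfies Δ²C(n) ≥ 2 if n = |w_{2k+1}| for some k ≥ 1, Δ²C(n) ≥ −2 if n = |s_{2k+1}| for some k ≥ 2, and Δ²C(n) ≥ 0 otherwise. -/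
/-- The weak bispecial candidate `s_{4k+1}` (an overlap product). -/
noncomputable def s1 (k : ℕ) : Word :=
  (wp (4*k-3)).reverse ++ (wp (4*k-1)).drop (wp (4*k-4)).length
    ++ (wp (4*k-3)).drop (wp (4*k-4)).length

/-- The weak bispecial candidate `s_{4k+3}` (an overlap product). -/
noncomputable def s3 (k : ℕ) : Word :=
  Ebar (wp (4*k-1)) ++ (wp (4*k+1)).drop (wp (4*k-2)).length
    ++ (wp (4*k-1)).drop (wp (4*k-2)).length

/-- `sOdd k = s_{2k+1}`. -/
noncomputable def sOdd (k : ℕ) : Word := if k % 2 = 0 then s1 (k/2) else s3 (k/2)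

set_option autoImplicit false

inductive T3 | A | B | C
  deriving DecidableEq
open T3

instance : Fintype T3 := ⟨{A, B, C}, by intro x; cases x <;> simp⟩

def ap {Γ : Type} (t : T3 → List Γ) (W : List T3) : List Γ := W.flatMap t

@[simp] lemma ap_nil {Γ : Type} (t : T3 → List Γ) : ap t [] = [] := rfl
@[simp] lemma ap_cons {Γ : Type} (t : T3 → List Γ) (c W) : ap t (c :: W) = t c ++ ap t W := by
  simp [ap]
@[simp] lemma ap_append {Γ : Type} (t : T3 → List Γ) (V W) : ap t (V ++ W) = ap t V ++ ap t W := by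
  simp [ap]

def fi : T3 → List T3
  | A => [C, A, B, A] | B => [A, B, A] | C => [A, A, B, A]
def ti : T3 → List Bool
  | A => [true] | B => [false, true, true, true] | C => [false, true, false, true, true, true]

def rr : ℕ → List T3
  | 0 => [] | 1 => [A] | n+2 => [A, B, A] ++ ap fi (rr n)

def Ll (v : List T3) : Prop := ∃ k, v <:+: rr k

structure Coding (Γ : Type) where
  m : List Γ
  t : T3 → List Γ
  y0 : List Γ
  f : Γ → Bool
  τ : Bool
  σ : Bool
  comm : ∀ c, m ++ t c = (t c).reverse ++ m
  mrev : m.reverse = m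
  mne : m ≠ []
  ne : ∀ c, t c ≠ []
  pc : ∀ c c', t c <+: t c' → c = c'
  sync0 : ∀ c, ∀ i < (t c).length, m <+: ((t c).reverse ++ m).drop i → i = 0
  spec : ∀ c1 c2 b1 b2, ∀ n < (t c1).length, ((t c1).take n ++ [b1] <+: t c1 ∧
    (t c1).take n ++ [b2] <+: t c2) → f b1 = f b2 ∨ (t c1).take n = [] ∨ (t c1).take n = y0
  head : ∀ c b, [b] <+: t c → f b = xor τ (decide (c = A))
  y0s : ∀ b c, y0 ++ [b] <+: t c → (c = B ∧ f b = σ) ∨ (c = C ∧ f b = !σ)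
  yB : ∃ b, y0 ++ [b] <+: t B
  yC : ∃ b, y0 ++ [b] <+: t C
  y0ne : y0 ≠ []

def cphi : Coding T3 where
  m := [A, B, A]
  t := fi
  y0 := [A]
  f := fun c => decide (c = A)
  τ := true
  σ := false
  comm := by decide
  mrev := by decide
  mne := by decide
  ne := by decide
  pc := by decide
  sync0 := by decide
  spec := by decide
  head := by decide
  y0s := by decide
  yB := by decide
  yC := by decide
  y0ne := by decide

def cd : Coding Bool where
  m := [true, true, true]
  t := ti
  y0 := [false, true]
  f := id
  τ := false
  σ := true
  comm := by decide
  mrev := by decide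
  mne := by decide
  ne := by decide
  pc := by decide
  sync0 := by decide
  spec := by decide
  head := by decide
  y0s := by decide
  yB := by decide
  yC := by decide
  y0ne := by decide

lemma rr_pre_succ : ∀ n, rr n <+: rr (n+1)
  | 0 => by simp [rr]
  | 1 => by decide
  | n+2 => by
    obtain ⟨s, hs⟩ := rr_pre_succ n
    refine ⟨ap fi s, ?_⟩
    show [A, B, A] ++ ap fi (rr n) ++ ap fi s = [A, B, A] ++ ap fi (rr (n+1))
    rw [← hs]; simp

lemma rr_mono {a b : ℕ} (h : a ≤ b) : rr a <+: rr b := by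
  induction h with
  | refl => exact List.prefix_rfl
  | step _ ih => exact ih.trans (rr_pre_succ _)

namespace Coding
variable {Γ : Type} (K : Coding Γ)

def L (v : List Γ) : Prop := ∃ k, v <:+: K.m ++ ap K.t (rr k)

lemma m_ap_rev (W : List T3) : K.m ++ ap K.t W.reverse = (ap K.t W).reverse ++ K.m := by
  induction W with
  | nil => simp
  | cons c W ih =>
    rw [List.reverse_cons, ap_append, ← List.append_assoc, ih, List.append_assoc]
    simp [K.comm]

lemma rev_m_ap (W : List T3) : (K.m ++ ap K.t W).reverse = K.m ++ ap K.t W.reverse := by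
  rw [m_ap_rev, List.reverse_append, K.mrev]

lemma code {v W : List T3} {δ : List Γ} (h : ap K.t W = ap K.t v ++ δ) :
    ∃ W', W = v ++ W' ∧ δ = ap K.t W' := by
  induction v generalizing W with
  | nil => exact ⟨W, rfl, by simpa using h.symm⟩
  | cons c v ih =>
    cases W with
    | nil => 
      have := K.ne c
      simp at h; exact absurd h.1 this
    | cons c' W =>
      simp only [ap_cons, List.append_assoc] at h
      have hc : c = c' := by
        rcases le_total (K.t c).length (K.t c').length with hl | hl
        · exact K.pc _ _ (List.prefix_of_prefix_length_le (l₃ := K.t c' ++ ap K.t W)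
            (by rw [h]; exact List.prefix_append _ _) (List.prefix_append _ _) hl)
        · exact (K.pc _ _ (List.prefix_of_prefix_length_le (l₃ := K.t c' ++ ap K.t W)
            (List.prefix_append _ _) (by rw [h]; exact List.prefix_append _ _) hl)).symm
      subst hc
      obtain ⟨W', h1, h2⟩ := ih (List.append_cancel_left h)
      exact ⟨W', by simp [h1], h2⟩

lemma sync {W : List T3} {α β : List Γ} (h : K.m ++ ap K.t W = α ++ K.m ++ β) :
    ∃ W1 W2, W = W1 ++ W2 ∧ α ++ K.m = K.m ++ ap K.t W1 ∧ β = ap K.t W2 := by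
  induction W generalizing α with
  | nil =>
    have := congrArg List.length h
    simp at this
    have ha : α = [] := List.length_eq_zero_iff.1 (by omega)
    have hb : β = [] := List.length_eq_zero_iff.1 (by omega)
    exact ⟨[], [], by simp [ha, hb]⟩
  | cons c W ih =>
    have h' : (K.t c).reverse ++ (K.m ++ ap K.t W) = α ++ (K.m ++ β) := by
      rw [← List.append_assoc, ← K.comm]; simpa using h
    by_cases hl : α.length < (K.t c).length
    · have h1 : α ++ K.m <+: (K.t c).reverse ++ K.m := by
        apply List.prefix_of_prefix_length_le (l₃ := α ++ (K.m ++ β))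
        · exact ⟨β, by simp⟩
        · rw [← h']; exact ⟨ap K.t W, by simp⟩
        · simp; omega
      have h2 : α.length = 0 := by
        apply K.sync0 c _ hl
        obtain ⟨z, hz⟩ := h1
        rw [← hz]; simp
      have ha : α = [] := List.length_eq_zero_iff.1 h2
      subst ha
      refine ⟨[], c :: W, rfl, by simp, ?_⟩
      simpa using h.symm
    · have h1 : (K.t c).reverse <+: α := by
        apply List.prefix_of_prefix_length_le (l₃ := α ++ (K.m ++ β))
        · rw [← h']; exact List.prefix_append _ _
        · exact List.prefix_append _ _
        · simp; omega
      obtain ⟨α', rfl⟩ := h1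
      obtain ⟨W1, W2, e1, e2, e3⟩ := ih (α := α') (by
        rw [List.append_assoc] at h'
        simpa using List.append_cancel_left h')
      refine ⟨c :: W1, W2, by simp [e1], ?_, e3⟩
      rw [List.append_assoc, e2, ← List.append_assoc, ← K.comm]; simp

def PP (y : List Γ) : Prop := ∃ c, y <+: K.t c ∧ y ≠ K.t c

lemma PP_nil : K.PP [] := ⟨A, List.nil_prefix, (K.ne A).symm⟩

lemma headgood {y : List Γ} {b W} (hy : K.PP y) (h : y ++ [b] <+: ap K.t W) :
    ∃ b' W', W = b' :: W' ∧ y ++ [b] <+: K.t b' := by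
  cases W with
  | nil => simp at h
  | cons c W =>
    refine ⟨c, W, rfl, ?_⟩
    simp only [ap_cons] at h
    by_cases hl : (y ++ [b]).length ≤ (K.t c).length
    · exact List.prefix_of_prefix_length_le h (List.prefix_append _ _) hl
    · exfalso
      obtain ⟨c0, h1, h2⟩ := hy
      have h3 : K.t c <+: y := List.prefix_of_prefix_length_le (List.prefix_append _ _)
        ((List.prefix_append _ _).trans h) (by simp at hl; omega)
      have := K.pc _ _ (h3.trans h1)
      subst this
      exact h2 (List.IsPrefix.eq_of_length_le h1 h3.length_le)

lemma occ {P v Q} (h : K.L (P ++ K.m ++ ap K.t v ++ Q)) :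
    ∃ k W1 W2, rr k = W1 ++ v ++ W2 ∧ Q <+: ap K.t W2 ∧ P.reverse <+: ap K.t W1.reverse := by
  obtain ⟨k, S, R, h⟩ := h
  have h1 : K.m ++ ap K.t (rr k) = (S ++ P) ++ K.m ++ (ap K.t v ++ (Q ++ R)) := by
    rw [← h]; simp
  obtain ⟨W1, W2, e1, e2, e3⟩ := K.sync h1
  obtain ⟨W3, e4, e5⟩ := K.code e3.symm
  refine ⟨k, W1, W3, by simp [e1, e4], ⟨R, e5⟩, S.reverse, ?_⟩
  have := congrArg List.reverse e2
  rw [rev_m_ap, List.reverse_append, K.mrev] at this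
  simpa using List.append_cancel_left this

lemma ext_fwd {a x v y b} (hx : K.PP x.reverse) (hy : K.PP y)
    (h : K.L (a :: (x ++ K.m ++ ap K.t v ++ y ++ [b]))) :
    ∃ a' b', Ll (a' :: (v ++ [b'])) ∧ y ++ [b] <+: K.t b' ∧ x.reverse ++ [a] <+: K.t a' := by
  obtain ⟨k, W1, W2, e1, e2, e3⟩ := K.occ (P := a :: x) (v := v) (Q := y ++ [b]) (by simpa using h)
  obtain ⟨b', W', rfl, hb⟩ := K.headgood hy e2
  rw [List.reverse_cons] at e3
  obtain ⟨a', W'', h4, ha⟩ := K.headgood hx e3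
  have : W1 = W''.reverse ++ [a'] := by
    rw [← List.reverse_reverse W1, h4]; simp
  subst this
  refine ⟨a', b', ⟨k, W''.reverse, W', ?_⟩, hb, ha⟩
  rw [e1]; simp

lemma ext_right {P v y b} (hy : K.PP y)
    (h : K.L (P ++ K.m ++ ap K.t v ++ y ++ [b])) : ∃ b', y ++ [b] <+: K.t b' := by
  obtain ⟨k, W1, W2, e1, e2, e3⟩ := K.occ (P := P) (v := v) (Q := y ++ [b]) (by simpa using h)
  obtain ⟨b', W', rfl, hb⟩ := K.headgood hy e2
  exact ⟨b', hb⟩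

lemma ext_bwd {a x v y b a' b'} (h : Ll (a' :: (v ++ [b']))) (hb : y ++ [b] <+: K.t b')
    (ha : x.reverse ++ [a] <+: K.t a') : K.L (a :: (x ++ K.m ++ ap K.t v ++ y ++ [b])) := by
  obtain ⟨k, P, Q, h⟩ := h
  obtain ⟨z, hz⟩ := hb
  obtain ⟨w, hw⟩ := ha
  refine ⟨k, (ap K.t P.reverse).reverse ++ w.reverse, z ++ ap K.t Q, ?_⟩
  have h1 := K.m_ap_rev P.reverse
  rw [List.reverse_reverse] at h1
  have h2 : K.m ++ K.t a' = w.reverse ++ a :: x ++ K.m := by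
    rw [K.comm, ← hw]; simp
  rw [← h]
  simp only [ap_append, ap_cons, ap_nil, ← hz]
  calc _ = (ap K.t P.reverse).reverse ++ (w.reverse ++ a :: x ++ K.m) ++ ap K.t v ++ y ++ [b] ++ z ++ ap K.t Q := by simp
    _ = (K.m ++ ap K.t P) ++ K.t a' ++ ap K.t v ++ y ++ [b] ++ z ++ ap K.t Q := by
      rw [← h2, h1]; simp
    _ = _ := by simp

lemma pdec {β W} (h : β <+: ap K.t W) : ∃ v y, β = ap K.t v ++ y ∧ K.PP y := by
  induction W generalizing β with
  | nil => exact ⟨[], [], by simpa using h, K.PP_nil⟩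
  | cons c W ih =>
    simp only [ap_cons] at h
    by_cases hl : β.length < (K.t c).length
    · refine ⟨[], β, rfl, c, List.prefix_of_prefix_length_le h (List.prefix_append _ _) hl.le, ?_⟩
      rintro rfl; omega
    · obtain ⟨β', rfl⟩ := List.prefix_of_prefix_length_le (List.prefix_append _ _) h (not_lt.1 hl)
      obtain ⟨v, y, h1, h2⟩ := ih (by simpa [List.prefix_append_right_inj] using h)
      exact ⟨c :: v, y, by simp [h1], h2⟩

lemma cover {v} (h : K.L v) (hm : K.m <:+: v) :
    ∃ x v' y, v = x ++ K.m ++ ap K.t v' ++ y ∧ K.PP x.reverse ∧ K.PP y := by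
  obtain ⟨α, β, rfl⟩ := hm
  obtain ⟨k, W1, W2, e1, e2, e3⟩ := K.occ (P := α) (v := []) (Q := β) (by simpa using h)
  obtain ⟨v2, y, rfl, hy⟩ := K.pdec e2
  obtain ⟨v1, x, h1, hx⟩ := K.pdec e3
  refine ⟨x.reverse, v1.reverse ++ v2, y, ?_, by simpa using hx, hy⟩
  have : α = x.reverse ++ (ap K.t v1).reverse := by
    rw [← List.reverse_reverse α, h1]; simp
  have h2 := K.m_ap_rev v1
  subst this
  calc _ = x.reverse ++ ((ap K.t v1).reverse ++ K.m) ++ ap K.t v2 ++ y := by simp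
    _ = _ := by rw [← h2]; simp

lemma nom {v W} (h : v <:+: K.m ++ ap K.t W) (hm : ¬ K.m <:+: v) :
    ∃ c, v <:+: (K.t c).reverse ++ K.m := by
  induction W with
  | nil => exact ⟨A, (by simpa using h : v <:+: K.m).trans ⟨(K.t A).reverse, [], by simp⟩⟩
  | cons c W ih =>
    obtain ⟨P, Q, h⟩ := h
    have h' : (K.t c).reverse ++ (K.m ++ ap K.t W) = P ++ (v ++ Q) := by
      rw [← List.append_assoc, ← K.comm]; simpa using h.symm
    by_cases hl : (K.t c).length ≤ P.length
    · obtain ⟨P', rfl⟩ : (K.t c).reverse <+: P := List.prefix_of_prefix_length_le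
        (l₃ := P ++ (v ++ Q)) (h' ▸ List.prefix_append _ _) (List.prefix_append _ _) (by simpa)
      apply ih
      rw [List.append_assoc] at h'
      exact ⟨P', Q, by simpa using (List.append_cancel_left h').symm⟩
    · by_cases hl2 : (P ++ v).length ≤ ((K.t c).reverse ++ K.m).length
      · obtain ⟨z, hz⟩ : P ++ v <+: (K.t c).reverse ++ K.m := List.prefix_of_prefix_length_le
          (l₃ := P ++ (v ++ Q)) ⟨Q, by simp⟩ (h' ▸ ⟨ap K.t W, by simp⟩) hl2
        exact ⟨c, P, z, hz⟩
      · exfalso; apply hm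
        obtain ⟨z, hz⟩ : P <+: (K.t c).reverse := List.prefix_of_prefix_length_le
          (l₃ := P ++ (v ++ Q)) (List.prefix_append _ _) (h' ▸ List.prefix_append _ _) (by simp; omega)
        rw [← hz, List.append_assoc] at h'
        have h3 := List.append_cancel_left h'
        obtain ⟨w, rfl⟩ : z ++ K.m <+: v := List.prefix_of_prefix_length_le
          (l₃ := v ++ Q) (h3 ▸ ⟨ap K.t W, by simp⟩) (List.prefix_append _ _) (by
            have := congrArg List.length hz
            simp at hl2 this ⊢; omega)
        exact ⟨z, w, by simp⟩

end Coding

section weak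
variable {Γ : Type}

def ee (P : List Γ → Prop) (f : Γ → Bool) (v : List Γ) (i j : Bool) : Prop :=
  ∃ a b, f a = i ∧ f b = j ∧ P (a :: (v ++ [b]))

def Weak (P : List Γ → Prop) (f : Γ → Bool) (v : List Γ) : Prop :=
  ∃ s, ∀ i j, ee P f v i j ↔ xor i j = s

lemma not_weak_row {P : List Γ → Prop} {f v i} (h1 : ee P f v i true) (h2 : ee P f v i false) :
    ¬ Weak P f v := by
  rintro ⟨s, h⟩
  have a := (h _ _).1 h1
  have b := (h _ _).1 h2
  cases i <;> cases s <;> simp at a b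

lemma Weak.exrow {P : List Γ → Prop} {f v} (h : Weak P f v) (i : Bool) : ∃ j, ee P f v i j := by
  obtain ⟨s, h⟩ := h
  exact ⟨xor i s, (h _ _).2 (by cases i <;> cases s <;> rfl)⟩

lemma Weak.excol {P : List Γ → Prop} {f v} (h : Weak P f v) (j : Bool) : ∃ i, ee P f v i j := by
  obtain ⟨s, h⟩ := h
  exact ⟨xor j s, (h _ _).2 (by cases j <;> cases s <;> rfl)⟩

def infs {α : Type} (l : List α) : List (List α) := l.tails.flatMap List.inits

lemma mem_infs {α : Type} {v l : List α} (h : v <:+: l) : v ∈ infs l := by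
  obtain ⟨s, t, rfl⟩ := h
  simp only [infs, List.mem_flatMap, List.mem_tails, List.mem_inits]
  exact ⟨v ++ t, ⟨s, by simp⟩, List.prefix_append _ _⟩
end weak

lemma rr_rev : ∀ n, (rr n).reverse = rr n
  | 0 => rfl
  | 1 => rfl
  | n+2 => by
    have := cphi.rev_m_ap (rr n)
    rw [rr_rev n] at this
    exact this

lemma L_iff_Ll (v : List T3) : cphi.L v ↔ Ll v := by
  constructor
  · rintro ⟨k, h⟩; exact ⟨k+2, h⟩
  · rintro ⟨k, h⟩; exact ⟨k, h.trans (rr_mono (by omega : k ≤ k+2)).isInfix⟩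

lemma Ll_rev {v} (h : Ll v) : Ll v.reverse := by
  obtain ⟨k, h⟩ := h
  exact ⟨k, by rw [← rr_rev]; exact List.reverse_infix.2 h⟩

lemma Ll_infix {v w} (h : Ll w) (hv : v <:+: w) : Ll v := by
  obtain ⟨k, h⟩ := h
  exact ⟨k, hv.trans h⟩

namespace Coding
variable {Γ : Type} (K : Coding Γ)

lemma L_infix {v w} (h : K.L w) (hv : v <:+: w) : K.L v := by
  obtain ⟨k, h⟩ := h
  exact ⟨k, hv.trans h⟩

lemma L_rev {v} (h : K.L v) : K.L v.reverse := by
  obtain ⟨k, h⟩ := h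
  refine ⟨k, ?_⟩
  have := K.rev_m_ap (rr k)
  rw [rr_rev] at this
  rw [← this]; exact List.reverse_infix.2 h

def good (w : List Γ) : Prop := K.m <:+: w ∨ ∃ c, w <:+: (K.t c).reverse ++ K.m

instance [DecidableEq Γ] (w : List Γ) : Decidable (K.good w) := by
  unfold good; infer_instance

lemma good_of_L {w} (h : K.L w) : K.good w := by
  obtain ⟨k, h⟩ := h
  by_cases hm : K.m <:+: w
  · exact Or.inl hm
  · exact Or.inr (K.nom h hm)

lemma spec' {y c1 c2 b1 b2} (h1 : y ++ [b1] <+: K.t c1) (h2 : y ++ [b2] <+: K.t c2)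
    (h : f K b1 ≠ f K b2) : y = [] ∨ y = K.y0 := by
  have hy : y = (K.t c1).take y.length :=
    (List.prefix_iff_eq_take.1 ((List.prefix_append _ _).trans h1))
  have hl := h1.length_le
  simp at hl
  rw [hy] at h1 h2 ⊢
  simpa [h] using K.spec c1 c2 b1 b2 y.length (by omega) ⟨by simpa using h1, by simpa using h2⟩
end Coding

lemma fi_C {y : List T3} {c} (h : y ++ [C] <+: fi c) : y = [] := by
  have hy : y = (fi c).take y.length :=
    (List.prefix_iff_eq_take.1 ((List.prefix_append _ _).trans h))
  have hl := h.length_le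
  simp at hl
  have key : ∀ c, ∀ n < (fi c).length, (fi c).take n ++ [C] <+: fi c → (fi c).take n = [] := by
    decide
  rw [hy] at h ⊢
  exact key c _ (by omega) (by simpa using h)

lemma BC {v} (h1 : Ll (v ++ [B])) (h2 : Ll (v ++ [C])) : v = [] ∨ v = [A] := by
  rw [← L_iff_Ll] at h1 h2
  have hv := cphi.L_infix h1 (List.prefix_append v [B]).isInfix
  by_cases hm : cphi.m <:+: v
  · exfalso
    obtain ⟨x, v', y, rfl, hx, hy⟩ := cphi.cover hv hm
    obtain ⟨c1, e1⟩ := cphi.ext_right hy h1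
    obtain ⟨c2, e2⟩ := cphi.ext_right hy h2
    have := fi_C e2
    subst this
    have key : ∀ c, ¬ [B] <+: fi c := by decide
    exact key _ e1
  · obtain ⟨k, hk⟩ := hv
    obtain ⟨c, hc⟩ := cphi.nom hk hm
    have g1 := cphi.good_of_L h1
    have g2 := cphi.good_of_L h2
    have key : ∀ c, ∀ v ∈ infs ((fi c).reverse ++ [A, B, A]), 
      (¬ cphi.m <:+: v ∧ cphi.good (v ++ [B]) ∧ cphi.good (v ++ [C])) → v = [] ∨ v = [A] := by decide
    exact key c v (mem_infs hc) ⟨hm, g1, g2⟩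

lemma BC' {v} (h1 : Ll (B :: v)) (h2 : Ll (C :: v)) : v = [] ∨ v = [A] := by
  have := BC (v := v.reverse) (by simpa using Ll_rev h1) (by simpa using Ll_rev h2)
  rcases this with h | h
  · left; simpa using h
  · right; simpa using congrArg List.reverse h

lemma two {a b} (hb : b = B ∨ b = C) (h : Ll [a, b]) : a = A := by
  have := cphi.good_of_L ((L_iff_Ll _).2 h)
  have key : ∀ a b, ((b = B ∨ b = C) ∧ cphi.good [a, b]) → a = A := by decide
  exact key a b ⟨hb, this⟩

lemma Ll_of (v : List T3) (h : v <:+: rr 5) : Ll v := ⟨5, h⟩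

namespace Coding
variable {Γ : Type} (K : Coding Γ)

lemma hd (c : T3) : ∃ b, [b] <+: K.t c := by
  have := K.ne c
  cases h : K.t c with
  | nil => exact absurd h this
  | cons b l => exact ⟨b, by simp⟩

lemma PPy0 : K.PP K.y0 := by
  obtain ⟨b, hb⟩ := K.yB
  refine ⟨B, (List.prefix_append _ _).trans hb, fun h => ?_⟩
  have := hb.length_le
  rw [h] at this; simp at this

lemma ee_m (v : List T3) (i j : Bool) :
    ee K.L K.f (K.m ++ ap K.t v) (xor K.τ i) (xor K.τ j) ↔ ee Ll (fun c => decide (c = A)) v i j := by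
  constructor
  · rintro ⟨a, b, ha, hb, h⟩
    obtain ⟨a', b', h1, h2, h3⟩ := K.ext_fwd (a := a) (x := []) (v := v) (y := []) (b := b)
      K.PP_nil K.PP_nil (by simpa using h)
    have e1 := K.head _ _ (by simpa using h2)
    have e2 := K.head _ _ (by simpa using h3)
    refine ⟨a', b', ?_, ?_, h1⟩
    · rw [ha] at e2; exact (Bool.xor_right_inj.1 e2).symm
    · rw [hb] at e1; exact (Bool.xor_right_inj.1 e1).symm
  · rintro ⟨a', b', ha, hb, h⟩
    obtain ⟨a, h1⟩ := K.hd a'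
    obtain ⟨b, h2⟩ := K.hd b'
    refine ⟨a, b, by rw [← ha, K.head _ _ h1], by rw [← hb, K.head _ _ h2], ?_⟩
    simpa using K.ext_bwd (x := []) (y := []) h (by simpa using h2) (by simpa using h1)

lemma weak_m {v : List T3} (h : Weak K.L K.f (K.m ++ ap K.t v)) :
    Weak Ll (fun c => decide (c = A)) v := by
  obtain ⟨s, h⟩ := h
  refine ⟨s, fun i j => ?_⟩
  rw [← K.ee_m, h]
  cases i <;> cases j <;> cases K.τ <;> simp

lemma weak_rev {v} (h : Weak K.L K.f v) : Weak K.L K.f v.reverse := by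
  have key : ∀ v i j, ee K.L K.f v i j → ee K.L K.f v.reverse j i := by
    rintro v i j ⟨a, b, ha, hb, h⟩
    exact ⟨b, a, hb, ha, by simpa using K.L_rev h⟩
  obtain ⟨s, h⟩ := h
  refine ⟨s, fun i j => ?_⟩
  rw [Bool.xor_comm, ← h]
  exact ⟨fun h => by simpa using key _ _ _ h, key _ _ _⟩

lemma right2 {x v} (hx : K.PP x.reverse) (h : Weak K.L K.f (x ++ K.m ++ ap K.t v ++ K.y0)) :
    v = [] ∨ v = [A] := by
  have key : ∀ j, ∃ b a b', K.f b = j ∧ Ll (a :: (v ++ [b'])) ∧ K.y0 ++ [b] <+: K.t b' := by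
    intro j
    obtain ⟨i, a, b, ha, hb, h⟩ := h.excol j
    obtain ⟨a', b', h1, h2, h3⟩ := K.ext_fwd hx K.PPy0 h
    exact ⟨b, a', b', hb, h1, h2⟩
  have key2 : ∀ a b', Ll (a :: (v ++ [b'])) → Ll (v ++ [b']) := fun a b' h =>
    Ll_infix h (List.suffix_cons _ _).isInfix
  obtain ⟨b1, a1, c1, p1, q1, s1⟩ := key K.σ
  obtain ⟨b2, a2, c2, p2, q2, s2⟩ := key (!K.σ)
  have t1 := K.y0s _ _ s1
  have t2 := K.y0s _ _ s2
  rw [p1] at t1; rw [p2] at t2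
  simp at t1 t2
  subst t1; subst t2
  exact BC (key2 _ _ q1) (key2 _ _ q2)

lemma no_y {v} : ¬ Weak K.L K.f (K.m ++ ap K.t v ++ K.y0) := by
  intro h
  have hv := K.right2 (x := []) K.PP_nil (by simpa using h)
  rcases hv with rfl | rfl
  · obtain ⟨j, a, b, ha, hb, h⟩ := h.exrow (xor K.τ false)
    obtain ⟨a', b', h1, h2, h3⟩ := K.ext_fwd (x := []) (v := []) K.PP_nil K.PPy0 (by simpa using h)
    have hb' := K.y0s _ _ h2
    have := two (a := a') (b := b') (by tauto) h1
    subst this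
    have := K.head _ _ (by simpa using h3)
    rw [ha] at this
    simp at this
  · obtain ⟨bB, hB⟩ := K.yB
    obtain ⟨bC, hC⟩ := K.yC
    obtain ⟨aB, hB'⟩ := K.hd B
    obtain ⟨aC, hC'⟩ := K.hd C
    have e1 := K.ext_bwd (x := []) (v := [A]) (a' := C) (b' := B) (Ll_of _ (by decide)) hB hC'
    have e2 := K.ext_bwd (x := []) (v := [A]) (a' := B) (b' := C) (Ll_of _ (by decide)) hC hB'
    have f1 := K.head _ _ hB'
    have f2 := K.head _ _ hC'
    have f3 := K.y0s _ _ hB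
    have f4 := K.y0s _ _ hC
    simp at f1 f2 f3 f4
    have w1 : ee K.L K.f (K.m ++ ap K.t [A] ++ K.y0) K.τ K.σ := ⟨aC, bB, f2, f3, by simpa using e1⟩
    have w2 : ee K.L K.f (K.m ++ ap K.t [A] ++ K.y0) K.τ (!K.σ) := ⟨aB, bC, f1, f4, by simpa using e2⟩
    cases hs : K.σ <;> rw [hs] at w1 w2
    · exact not_weak_row w2 w1 h
    · exact not_weak_row w1 w2 h

theorem gen {v} (h : Weak K.L K.f v) (hm : K.m <:+: v) :
    v = K.y0.reverse ++ K.m ++ K.t A ++ K.y0 ∨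
      ∃ v', v = K.m ++ ap K.t v' ∧ Weak Ll (fun c => decide (c = A)) v' := by
  have hL : K.L v := by
    obtain ⟨j, a, b, ha, hb, h⟩ := h.exrow true
    exact K.L_infix h ⟨[a], [b], by simp⟩
  obtain ⟨x, v', y, rfl, hx, hy⟩ := K.cover hL hm
  have hy' : y = [] ∨ y = K.y0 := by
    obtain ⟨i, a, b, ha, hb, h1⟩ := h.excol true
    obtain ⟨_, _, _, h2, _⟩ := K.ext_fwd hx hy h1
    obtain ⟨i', a', b', ha', hb', h1'⟩ := h.excol false
    obtain ⟨_, _, _, h2', _⟩ := K.ext_fwd hx hy h1'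
    exact K.spec' h2 h2' (by simp [hb, hb'])
  have hx' : x.reverse = [] ∨ x.reverse = K.y0 := by
    obtain ⟨i, a, b, ha, hb, h1⟩ := h.exrow true
    obtain ⟨_, _, _, _, h2⟩ := K.ext_fwd hx hy h1
    obtain ⟨i', a', b', ha', hb', h1'⟩ := h.exrow false
    obtain ⟨_, _, _, _, h2'⟩ := K.ext_fwd hx hy h1'
    exact K.spec' h2 h2' (by simp [ha, ha'])
  rcases hx' with hx' | hx'
  · have : x = [] := by simpa using hx'
    subst this
    rcases hy' with rfl | rfl
    · right
      exact ⟨v', by simp, K.weak_m (by simpa using h)⟩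
    · exact absurd (by simpa using h) (K.no_y (v := v'))
  · have : x = K.y0.reverse := by rw [← hx']; simp
    subst this
    rcases hy' with rfl | rfl
    · exfalso
      apply K.no_y (v := v'.reverse)
      have := K.weak_rev h
      rw [← K.rev_m_ap]; simpa using this
    · rcases K.right2 hx h with rfl | rfl
      · exfalso
        obtain ⟨j, a, b, ha, hb, h⟩ := h.exrow true
        obtain ⟨a', b', h1, h2, h3⟩ := K.ext_fwd (v := []) hx K.PPy0 h
        have hb' := K.y0s _ _ h2
        have := two (a := a') (b := b') (by tauto) h1
        subst this
        have := K.y0s _ _ (by simpa using h3)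
        simp at this
      · left; simp

end Coding

def ZZ : ℕ → List T3
  | 0 => [A] ++ [A, B, A] ++ fi A ++ [A]
  | k+1 => [A, B, A] ++ ap fi (ZZ k)

abbrev fA : T3 → Bool := fun c => decide (c = A)

lemma eeLl {v : List T3} {i j} (a b : T3) (ha : fA a = i) (hb : fA b = j)
    (h : a :: (v ++ [b]) <:+: rr 5) : ee Ll fA v i j := ⟨a, b, ha, hb, Ll_of _ h⟩

def wk {Γ : Type} (K : Coding Γ) (v : List Γ) : Prop :=
  ¬ K.m <:+: v ∧ (∃ a, K.f a = true ∧ K.good (a :: v)) ∧ (∃ a, K.f a = false ∧ K.good (a :: v)) ∧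
    (∃ a, K.f a = true ∧ K.good (v ++ [a])) ∧ (∃ a, K.f a = false ∧ K.good (v ++ [a]))

instance {Γ : Type} [Fintype Γ] [DecidableEq Γ] (K : Coding Γ) (v) : Decidable (wk K v) := by
  unfold wk; infer_instance

lemma wk_of {Γ : Type} (K : Coding Γ) {v} (h : Weak K.L K.f v) (hm : ¬ K.m <:+: v) :
    wk K v ∧ ∃ c, v ∈ infs ((K.t c).reverse ++ K.m) := by
  refine ⟨⟨hm, ?_, ?_, ?_, ?_⟩, ?_⟩
  · obtain ⟨j, a, b, ha, hb, h⟩ := h.exrow true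
    exact ⟨a, ha, K.good_of_L (K.L_infix h ⟨[], [b], by simp⟩)⟩
  · obtain ⟨j, a, b, ha, hb, h⟩ := h.exrow false
    exact ⟨a, ha, K.good_of_L (K.L_infix h ⟨[], [b], by simp⟩)⟩
  · obtain ⟨j, a, b, ha, hb, h⟩ := h.excol true
    exact ⟨b, hb, K.good_of_L (K.L_infix h ⟨[a], [], by simp⟩)⟩
  · obtain ⟨j, a, b, ha, hb, h⟩ := h.excol false
    exact ⟨b, hb, K.good_of_L (K.L_infix h ⟨[a], [], by simp⟩)⟩
  · obtain ⟨j, a, b, ha, hb, h⟩ := h.excol false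
    obtain ⟨k, hk⟩ := K.L_infix h (v := v) ⟨[a], [b], by simp⟩
    obtain ⟨c, hc⟩ := K.nom hk hm
    exact ⟨c, mem_infs hc⟩

theorem weak_l (n : ℕ) : ∀ v, v.length ≤ n → Weak Ll fA v → ∃ k, v = ZZ k := by
  have hLL : cphi.L = Ll := funext fun v => propext (L_iff_Ll v)
  induction n with
  | zero =>
    intro v hv h
    have : v = [] := List.length_eq_zero_iff.1 (by omega)
    subst this
    exact absurd h (not_weak_row (eeLl A A rfl rfl (by decide)) (eeLl A B rfl rfl (by decide)))
  | succ n ih =>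
    intro v hv h
    have h' : Weak cphi.L cphi.f v := by rw [hLL]; exact h
    by_cases hm : cphi.m <:+: v
    · rcases cphi.gen h' hm with h1 | ⟨v', rfl, hw⟩
      · exact ⟨0, h1⟩
      · have hl : ∀ v', v'.length ≤ (ap cphi.t v').length := by
          intro v'
          induction v' with
          | nil => simp
          | cons c v' ih =>
            have := List.length_pos_iff.2 (cphi.ne c)
            simp; omega
        have h3 : cphi.m.length = 3 := rfl
        obtain ⟨k, rfl⟩ := ih v' (by have := hl v'; simp at hv; omega) hw
        exact ⟨k+1, rfl⟩
    · exfalso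
      obtain ⟨hk, c, hc⟩ := wk_of cphi h' hm
      have key : ∀ c, ∀ v ∈ infs ((cphi.t c).reverse ++ cphi.m), wk cphi v →
        v = [] ∨ v = [A] ∨ v = [A, A] := by decide
      rcases key c v hc hk with rfl | rfl | rfl
      · exact absurd h (not_weak_row (eeLl A A rfl rfl (by decide)) (eeLl A B rfl rfl (by decide)))
      · exact absurd h (not_weak_row (eeLl A A rfl rfl (by decide)) (eeLl A B rfl rfl (by decide)))
      · exact absurd h (not_weak_row (eeLl B A rfl rfl (by decide)) (eeLl B B rfl rfl (by decide)))

lemma eed {v : List Bool} {i j : Bool}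
    (h : i :: (v ++ [j]) <:+: [true, true, true] ++ ap ti (rr 3)) : ee cd.L id v i j :=
  ⟨i, j, rfl, rfl, 3, h⟩

theorem weak_d {v} (h : Weak cd.L id v) :
    v = [true, false, true, true, true, true, false, true] ∨
      ∃ k, v = [true, true, true] ++ ap ti (ZZ k) := by
  by_cases hm : cd.m <:+: v
  · rcases cd.gen h hm with h1 | ⟨v', rfl, hw⟩
    · left; exact h1
    · obtain ⟨k, rfl⟩ := weak_l _ v' le_rfl hw
      exact Or.inr ⟨k, rfl⟩
  · exfalso
    obtain ⟨hk, c, hc⟩ := wk_of cd h hm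
    have key : ∀ c, ∀ v ∈ infs ((cd.t c).reverse ++ cd.m), wk cd v →
        v = [] ∨ v = [true] ∨ v = [true, true] ∨ v = [true, false, true] := by decide
    rcases key c v hc hk with rfl | rfl | rfl | rfl
    · exact absurd h (not_weak_row (i := true) (eed (by decide)) (eed (by decide)))
    · exact absurd h (not_weak_row (i := true) (eed (by decide)) (eed (by decide)))
    · exact absurd h (not_weak_row (i := true) (eed (by decide)) (eed (by decide)))
    · exact absurd h (not_weak_row (i := true) (eed (by decide)) (eed (by decide)))

lemma strong_l (k : ℕ) : ∀ i j, ee Ll fA (rr (2*k+1)) i j := by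
  induction k with
  | zero =>
    intro i j
    cases i <;> cases j
    · exact eeLl B C rfl rfl (by decide)
    · exact eeLl B A rfl rfl (by decide)
    · exact eeLl A B rfl rfl (by decide)
    · exact eeLl A A rfl rfl (by decide)
  | succ k ih =>
    intro i j
    have hLL : cphi.L = Ll := funext fun v => propext (L_iff_Ll v)
    have := (cphi.ee_m (rr (2*k+1)) (!i) (!j)).2 (ih _ _)
    rw [hLL] at this
    have e : ∀ i, xor cphi.τ (!i) = i := by decide
    rw [e, e] at this
    exact this

lemma strong_d (k : ℕ) (i j : Bool) : ee cd.L id ([true, true, true] ++ ap ti (rr (2*k+1))) i j := by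
  have := (cd.ee_m (rr (2*k+1)) i j).2 (strong_l k _ _)
  have e : ∀ i, xor cd.τ i = i := by decide
  rw [e, e] at this
  exact this


def sumL : ℕ → (List Bool → ℤ) → ℤ
  | 0, g => g []
  | m+1, g => sumL m (fun v => g (true :: v) + g (false :: v))

lemma sumL_add (m : ℕ) (g h : List Bool → ℤ) : sumL m (fun v => g v + h v) = sumL m g + sumL m h := by
  induction m generalizing g h with
  | zero => rfl
  | succ m ih =>
    simp only [sumL]
    rw [← ih]; congr 1; funext v; ring

lemma sumL_sub (m : ℕ) (g h : List Bool → ℤ) : sumL m (fun v => g v - h v) = sumL m g - sumL m h := by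
  have := sumL_add m (fun v => g v - h v) h
  simp at this; linarith

lemma sumL_snoc (m : ℕ) (g : List Bool → ℤ) :
    sumL (m+1) g = sumL m (fun v => g (v ++ [true]) + g (v ++ [false])) := by
  induction m generalizing g with
  | zero => rfl
  | succ m ih =>
    rw [sumL, ih, sumL]
    congr 1; funext v; simp; ring

lemma sumL_mono (m : ℕ) (g h : List Bool → ℤ) (H : ∀ v, v.length = m → h v ≤ g v) :
    sumL m h ≤ sumL m g := by
  induction m generalizing g h with
  | zero => exact H [] rfl
  | succ m ih =>
    apply ih
    intro v hv
    have h1 := H (true :: v) (by simp [hv])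
    have h2 := H (false :: v) (by simp [hv])
    linarith

lemma sumL_zero (m : ℕ) : sumL m (fun _ => 0) = 0 := by
  induction m with
  | zero => rfl
  | succ m ih => simpa [sumL] using ih

lemma sumL_single (v0 : List Bool) (c : ℤ) : 
    sumL v0.length (fun v => if v = v0 then c else 0) = c := by
  induction v0 with
  | nil => simp [sumL]
  | cons a v0 ih =>
    simp only [List.length_cons, sumL]
    rw [← ih]; congr 1; funext v
    cases a <;> simp [ih]

open Classical in
lemma ncard_sumL (m : ℕ) (P : List Bool → Prop) :
    (Set.ncard {v : List Bool | P v ∧ v.length = m} : ℤ) = sumL m (fun v => if P v then 1 else 0) := by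
  induction m generalizing P with
  | zero =>
    by_cases h : P []
    · have : {v : List Bool | P v ∧ v.length = 0} = {[]} := by
        ext v; simp; rintro rfl; exact h
      rw [this]; simp [sumL, h]
    · have : {v : List Bool | P v ∧ v.length = 0} = ∅ := by
        ext v; simp; rintro h1 rfl; exact h h1
      rw [this]; simp [sumL, h]
  | succ m ih =>
    rw [sumL, sumL_add, ← ih, ← ih]
    have hfin : ∀ Q : List Bool → Prop, {v : List Bool | Q v ∧ v.length = m}.Finite := fun Q =>
      (List.finite_length_eq Bool m).subset (fun v hv => hv.2)
    have : {v : List Bool | P v ∧ v.length = m+1} =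
      (List.cons true) '' {v | P (true :: v) ∧ v.length = m} ∪
      (List.cons false) '' {v | P (false :: v) ∧ v.length = m} := by
      ext v
      cases v with
      | nil => simp
      | cons a v => cases a <;> simp
    rw [this, Set.ncard_union_eq _ ((hfin _).image _) ((hfin _).image _),
      Set.ncard_image_of_injective _ List.cons_injective,
      Set.ncard_image_of_injective _ List.cons_injective]
    · push_cast; rfl
    · rw [Set.disjoint_left]
      rintro _ ⟨x, _, rfl⟩ ⟨y, _, h⟩
      simp at h

open Classical in
noncomputable def pz (P : List Bool → Prop) (v : List Bool) : ℤ := if P v then 1 else 0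

noncomputable def beta (P : List Bool → Prop) (v : List Bool) : ℤ :=
  (pz P (true :: (v ++ [true])) + pz P (true :: (v ++ [false])) + pz P (false :: (v ++ [true])) +
    pz P (false :: (v ++ [false]))) - (pz P (true :: v) + pz P (false :: v))
    - (pz P (v ++ [true]) + pz P (v ++ [false])) + pz P v

lemma second_diff (P : List Bool → Prop) (m : ℕ) :
    sumL (m+2) (pz P) - 2 * sumL (m+1) (pz P) + sumL m (pz P) = sumL m (beta P) := by
  have e1 : sumL (m+2) (pz P) = sumL m (fun v => pz P (true :: (v ++ [true])) + pz P (true :: (v ++ [false])) + pz P (false :: (v ++ [true])) +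
    pz P (false :: (v ++ [false]))) := by
    rw [sumL, sumL_snoc]; congr 1; funext v; ring
  have e2 : sumL (m+1) (pz P) = sumL m (fun v => pz P (true :: v) + pz P (false :: v)) := rfl
  have e3 := sumL_snoc m (pz P)
  unfold beta
  rw [sumL_add, sumL_sub, sumL_sub, ← e1, ← e2, ← e3]; ring

lemma beta_cases {P : List Bool → Prop} (hr : ∀ v, P v ↔ ∃ b, P (v ++ [b])) (hl : ∀ v, P v ↔ ∃ a, P (a :: v))
    (v : List Bool) : (-1 ≤ beta P v) ∧ (¬ Weak P id v → 0 ≤ beta P v) ∧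
    ((∀ i j, ee P id v i j) → 1 ≤ beta P v) := by
  have hee : ∀ i j, ee P id v i j ↔ P (i :: (v ++ [j])) := by
    intro i j
    constructor
    · rintro ⟨a, b, rfl, rfl, h⟩; exact h
    · intro h; exact ⟨i, j, rfl, rfl, h⟩
  have h1 := hr (true :: v)
  have h2 := hr (false :: v)
  have h3 := hl (v ++ [true])
  have h4 := hl (v ++ [false])
  have h5 := hl v
  simp only [Bool.exists_bool, List.cons_append] at h1 h2 h3 h4 h5
  unfold Weak beta pz
  simp only [hee, Bool.forall_bool, Bool.exists_bool]
  by_cases p1 : P (true :: (v ++ [true])) <;> by_cases p2 : P (true :: (v ++ [false])) <;>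
  by_cases p3 : P (false :: (v ++ [true])) <;> by_cases p4 : P (false :: (v ++ [false])) <;>
  simp only [p1, p2, p3, p4, or_true, true_or, or_false, false_or, iff_true, iff_false, or_self] at h1 h2 h3 h4 <;>
  simp only [h1, h2, or_true, true_or, or_false, false_or, iff_true, iff_false, or_self] at h5 <;>
  simp [p1, p2, p3, p4, h1, h2, h3, h4, h5]

def dif : List Bool → List Bool
  | a :: b :: l => xor a b :: dif (b :: l)
  | _ => []

lemma sumL_dif1 (n : ℕ) (g : List Bool → ℤ) (a : Bool) :
    sumL n (fun v => g (dif (a :: v))) = sumL n g := by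
  induction n generalizing g a with
  | zero => rfl
  | succ n ih =>
    simp only [sumL, dif]
    rw [sumL_add, sumL_add, ih (fun v => g (xor a true :: v)), ih (fun v => g (xor a false :: v))]
    cases a <;> simp [add_comm]

lemma sumL_dif (n : ℕ) (g : List Bool → ℤ) :
    sumL (n+1) (fun v => g (dif v)) = 2 * sumL n g := by
  simp only [sumL]
  rw [sumL_add, sumL_dif1, sumL_dif1]; ring

lemma rr_len_lt : ∀ n, (rr n).length < (rr (n+1)).length
  | 0 => by decide
  | 1 => by decide
  | n+2 => by
    have h := rr_len_lt n
    obtain ⟨s, hs⟩ := rr_pre_succ n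
    have e : rr (n+2+1) = rr (n+2) ++ ap fi s := by
      show [A, B, A] ++ ap fi (rr (n+1)) = [A, B, A] ++ ap fi (rr n) ++ ap fi s
      rw [← hs]; simp
    rw [← hs] at h
    cases s with
    | nil => simp at h
    | cons c s =>
      have := List.length_pos_iff.2 (cphi.ne c)
      have : 0 < (fi c).length := this
      rw [e]; simp; omega

lemma Ld_right (v) : cd.L v ↔ ∃ b, cd.L (v ++ [b]) := by
  constructor
  · rintro ⟨k, P, Q, h⟩
    obtain ⟨s, hs⟩ := rr_pre_succ k
    have hl := rr_len_lt k
    rw [← hs] at hl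
    cases s with
    | nil => simp at hl
    | cons c s =>
      have : cd.m ++ ap cd.t (rr (k+1)) = P ++ v ++ (Q ++ ap cd.t (c :: s)) := by
        rw [← hs, ap_append, ← List.append_assoc, ← h]; simp
      cases hq : Q ++ ap cd.t (c :: s) with
      | nil => 
        have := cd.ne c
        simp at hq; exact absurd hq.2.1 this
      | cons b R => exact ⟨b, k+1, P, R, by rw [this, hq]; simp⟩
  · rintro ⟨b, h⟩; exact cd.L_infix h (List.prefix_append _ _).isInfix

lemma Ld_left (v) : cd.L v ↔ ∃ b, cd.L (b :: v) := by
  constructor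
  · intro h
    obtain ⟨b, hb⟩ := (Ld_right _).1 (cd.L_rev h)
    exact ⟨b, by simpa using cd.L_rev hb⟩
  · rintro ⟨b, h⟩; exact cd.L_infix h (List.suffix_cons _ _).isInfix

def itg : Bool → List Bool → List Bool
  | a, [] => [a]
  | a, b :: l => a :: itg (xor a b) l

def pr : List Bool → Bool
  | [] => false
  | b :: l => xor b (pr l)

lemma pr_append (u v : List Bool) : pr (u ++ v) = xor (pr u) (pr v) := by
  induction u with
  | nil => simp [pr]
  | cons a u ih => simp [pr, ih]

lemma pr_reverse (u : List Bool) : pr u.reverse = pr u := by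
  induction u with
  | nil => rfl
  | cons a u ih => simp [pr, pr_append, ih, Bool.xor_comm]

lemma itg_len (a : Bool) (l : List Bool) : (itg a l).length = l.length + 1 := by
  induction l generalizing a with
  | nil => rfl
  | cons b l ih => simp [itg, ih]

lemma itg_snoc (a : Bool) (l : List Bool) (b : Bool) :
    itg a (l ++ [b]) = itg a l ++ [xor (xor a (pr l)) b] := by
  induction l generalizing a with
  | nil => simp [itg, pr]
  | cons c l ih => simp [itg, pr, ih]

lemma itg_append (a : Bool) (l : List Bool) (s : List Bool) : itg a l <+: itg a (l ++ s) := by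
  induction l generalizing a with
  | nil => cases s <;> simp [itg]
  | cons c l ih => simpa [itg] using ih _

lemma itg_rev (a : Bool) (l : List Bool) : (itg a l).reverse = itg (xor a (pr l)) l.reverse := by
  induction l generalizing a with
  | nil => simp [itg, pr]
  | cons c l ih => simp [itg, pr, ih, itg_snoc, pr_reverse]

lemma itg_not (a : Bool) (l : List Bool) : (itg a l).map Bool.not = itg (!a) l := by
  induction l generalizing a with
  | nil => simp [itg]
  | cons c l ih => simp [itg, ih]

lemma dif_itg (a : Bool) (l : List Bool) : dif (itg a l) = l := by
  induction l generalizing a with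
  | nil => rfl
  | cons b l ih =>
    cases l with
    | nil => simp [itg, dif]
    | cons c l => 
      have := ih (xor a b)
      simp only [itg] at this ⊢
      simp only [dif, this]; simp

lemma itg_dif (a : Bool) (l : List Bool) : itg a (dif (a :: l)) = a :: l := by
  induction l generalizing a with
  | nil => rfl
  | cons b l ih => simp [dif, itg, ih]

lemma itg_inj {a b l m} (h : itg a l = itg b m) : a = b ∧ l = m := by
  have h2 := congrArg dif h
  rw [dif_itg, dif_itg] at h2
  subst h2
  refine ⟨?_, rfl⟩
  cases l <;> simp [itg] at h
  · exact h
  · exact h.1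

lemma isPal_itg (a l) : IsPal (itg a l) ↔ l.reverse = l ∧ pr l = false := by
  unfold IsPal
  rw [itg_rev]
  constructor
  · intro h
    have := itg_inj h
    refine ⟨this.2, ?_⟩
    have := this.1
    cases a <;> simpa using this
  · rintro ⟨h1, h2⟩; rw [h1, h2]; simp

lemma isEPal_itg (a l) : IsEPal (itg a l) ↔ l.reverse = l ∧ pr l = true := by
  unfold IsEPal Ebar
  rw [itg_not, itg_rev]
  constructor
  · intro h
    have := itg_inj h
    refine ⟨this.2, ?_⟩
    have := this.1
    cases a <;> simpa using this
  · rintro ⟨h1, h2⟩; rw [h1, h2]; simp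

lemma pre_itg {p v : List Bool} {a} (h : itg a p <+: v) : ∃ l, v = itg a l ∧ p <+: l := by
  obtain ⟨s, rfl⟩ := h
  induction s generalizing p with
  | nil => exact ⟨p, by simp, List.prefix_rfl⟩
  | cons b s ih =>
    obtain ⟨l, h1, h2⟩ := @ih (p ++ [xor (xor a (pr p)) b])
    refine ⟨l, ?_, (List.prefix_append _ _).trans h2⟩
    rw [← h1, itg_snoc]; simp; cases a <;> cases b <;> cases pr p <;> rfl

lemma pal_unique {p l q : List Bool} (hl : l.reverse = l) (hq : q.reverse = q) (hpl : p <+: l)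
    (hpq : p <+: q) (hlen : l.length = q.length) (hle : q.length ≤ 2 * p.length + 1)
    (hp : pr l = pr q) : l = q := by
  obtain ⟨s, rfl⟩ := hpl
  obtain ⟨t, rfl⟩ := hpq
  simp at hlen hle
  congr 1
  rw [← List.reverse_inj]
  rw [List.reverse_append] at hl hq
  by_cases h : s.length ≤ p.length
  · have h1 : s.reverse <+: p := by
      apply List.prefix_of_prefix_length_le (l₃ := p ++ s) ⟨_, hl⟩ (List.prefix_append _ _); simpa
    have h2 : t.reverse <+: p := by
      apply List.prefix_of_prefix_length_le (l₃ := p ++ t) ⟨_, hq⟩ (List.prefix_append _ _); simp; omega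
    have h3 := List.prefix_of_prefix_length_le h1 h2 (by simp; omega)
    exact h3.eq_of_length (by simp; omega)
  · have h1 : p <+: s.reverse := by
      apply List.prefix_of_prefix_length_le (l₃ := p ++ s) (List.prefix_append _ _) ⟨_, hl⟩; simp; omega
    have h2 : p <+: t.reverse := by
      apply List.prefix_of_prefix_length_le (l₃ := p ++ t) (List.prefix_append _ _) ⟨_, hq⟩; simp; omega
    obtain ⟨x, hx⟩ := h1
    obtain ⟨y, hy⟩ := h2
    have lx := congrArg List.length hx
    have ly := congrArg List.length hy
    simp at lx ly
    have px := congrArg pr hx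
    have py := congrArg pr hy
    rw [pr_append, pr_reverse] at px py
    rw [pr_append, pr_append, ← px, ← py] at hp
    obtain ⟨x', rfl⟩ := List.length_eq_one_iff.1 (show x.length = 1 by omega)
    obtain ⟨y', rfl⟩ := List.length_eq_one_iff.1 (show y.length = 1 by omega)
    rw [← hx, ← hy]
    simp [pr] at hp
    rw [hp]

lemma closure_eq {Q : Word → Prop} {e : Bool} (hQ : ∀ a l, Q (itg a l) ↔ l.reverse = l ∧ pr l = e)
    {p q v : List Bool} (hq : q.reverse = q) (hqe : pr q = e) (hpq : p <+: q)
    (hle : q.length ≤ 2 * p.length + 1)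
    (hmin : ∀ l, l.reverse = l → pr l = e → p <+: l → q.length ≤ l.length)
    (hv : (itg true p <+: v ∧ Q v) ∧ ∀ v', (itg true p <+: v' ∧ Q v') → v.length ≤ v'.length) :
    v = itg true q := by
  obtain ⟨⟨h1, h2⟩, h3⟩ := hv
  obtain ⟨l, rfl, h4⟩ := pre_itg h1
  rw [hQ] at h2
  obtain ⟨s, rfl⟩ := hpq
  have h5 := h3 (itg true (p ++ s)) ⟨itg_append _ _ _, (hQ _ _).2 ⟨hq, hqe⟩⟩
  rw [itg_len, itg_len] at h5
  have h6 := hmin l h2.1 h2.2 h4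
  rw [pal_unique h2.1 hq h4 (List.prefix_append _ _) (by omega) hle (by rw [h2.2, hqe])]

lemma wp_step {n : ℕ} {d q : List Bool} {c : Bool} (hn : wp n = itg true d) (hc : c = pr d)
    (hq : q.reverse = q) (hqe : pr q = decide ((n+1) % 4 = 1 ∨ (n+1) % 4 = 2))
    (hpq : d ++ [c] <+: q) (hle : q.length ≤ 2 * d.length + 3)
    (hmin : ∀ l, l.reverse = l → pr l = pr q → d ++ [c] <+: l → q.length ≤ l.length) :
    wp (n+1) = itg true q := by
  have e : wp n ++ [true] = itg true (d ++ [c]) := by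
    rw [hn, itg_snoc, hc]; simp
  rw [wp, e]
  split_ifs with h
  · exact closure_eq (e := true) isEPal_itg hq (by rw [hqe]; simpa using h) hpq (by simp; omega)
      (fun l h1 h2 h3 => hmin l h1 (by rw [h2, hqe]; simpa using h) h3)
      (exists_minLength (epal_ext _)).choose_spec
  · exact closure_eq (e := false) isPal_itg hq (by rw [hqe]; simpa using h) hpq (by simp; omega)
      (fun l h1 h2 h3 => hmin l h1 (by rw [h2, hqe]; simpa using h) h3)
      (exists_minLength (pal_ext _)).choose_spec

lemma wp_one : wp 1 = itg true [true] := by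
  rw [wp, if_pos (by simp)]
  refine closure_eq (p := []) (e := true) isEPal_itg (by decide) (by decide) (by simp) (by simp) ?_
      (exists_minLength (epal_ext ([] ++ [true]))).choose_spec
  intro l h1 h2 h3
  cases l with
  | nil => simp [pr] at h2
  | cons a l => simp

lemma wp_two : wp 2 = itg true [true, true, true] := by
  refine wp_step (c := true) wp_one (by decide) (by decide) (by decide) (by decide) (by simp) ?_
  intro l h1 h2 h3
  obtain ⟨s, rfl⟩ := h3
  cases s with
  | nil => simp [pr] at h2
  | cons a l => simp

def dd (n : ℕ) : List Bool := [true, true, true] ++ ap ti (rr n)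

lemma dd_rev (n : ℕ) : (dd n).reverse = dd n := by
  have := cd.rev_m_ap (rr n)
  rw [rr_rev] at this
  exact this

lemma dd_mono {a b : ℕ} (h : a ≤ b) : dd a <+: dd b := by
  obtain ⟨s, hs⟩ := rr_mono h
  exact ⟨ap ti s, by unfold dd; rw [← hs]; simp⟩

lemma dd_len_lt (n : ℕ) : (dd n).length < (dd (n+1)).length := by
  obtain ⟨s, hs⟩ := rr_pre_succ n
  have h := rr_len_lt n
  rw [← hs] at h
  unfold dd
  rw [← hs]
  cases s with
  | nil => simp at h
  | cons c s =>
    have : 0 < (ti c).length := List.length_pos_iff.2 (cd.ne c)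
    simp; omega

lemma dd_strict : StrictMono (fun n => (dd n).length) := strictMono_nat_of_lt_succ dd_len_lt

def wA : List T3 → Bool
  | [] => false
  | C :: l => wA l
  | _ :: l => !(wA l)

lemma wA_append (u v) : wA (u ++ v) = xor (wA u) (wA v) := by
  induction u with
  | nil => simp [wA]
  | cons a u ih => cases a <;> simp [wA, ih]

lemma pr_ti (W) : pr (ap ti W) = wA W := by
  induction W with
  | nil => rfl
  | cons a u ih => cases a <;> simp [wA, ih, pr, ti]

lemma wA_fi (W) : wA (ap fi W) = wA W := by
  induction W with
  | nil => rfl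
  | cons a u ih => cases a <;> simp [wA, ih, fi]

lemma pr_dd (n : ℕ) : pr (dd n) = !(wA (rr n)) := by
  simp [dd, pr, pr_ti]

lemma wA_rr : ∀ n, wA (rr n) = decide (n % 4 = 1 ∨ n % 4 = 2)
  | 0 => by decide
  | 1 => by decide
  | n+2 => by
    have := wA_rr n
    rw [rr, wA_append, wA_fi, this]
    have : n % 4 < 4 := Nat.mod_lt _ (by norm_num)
    have h : n % 4 = 0 ∨ n % 4 = 1 ∨ n % 4 = 2 ∨ n % 4 = 3 := by omega
    rcases h with h | h | h | h <;> simp [Nat.add_mod, h, wA]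

lemma pr_dd' (n : ℕ) : pr (dd n) = decide (n % 4 = 0 ∨ n % 4 = 3) := by
  rw [pr_dd, wA_rr]
  have h : n % 4 = 0 ∨ n % 4 = 1 ∨ n % 4 = 2 ∨ n % 4 = 3 := by omega
  rcases h with h | h | h | h <;> simp [h]

lemma rr_next : ∀ n, ∃ x s, rr (n+1) = rr n ++ x :: s ∧ decide (x = A) = !(wA (rr n))
  | 0 => ⟨A, [], rfl, by decide⟩
  | 1 => ⟨B, [A], rfl, by decide⟩
  | n+2 => by
    obtain ⟨x, s, h1, h2⟩ := rr_next n
    have e : rr (n+2+1) = rr (n+2) ++ (fi x ++ ap fi s) := by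
      show [A, B, A] ++ ap fi (rr (n+1)) = [A, B, A] ++ ap fi (rr n) ++ _
      rw [h1]; simp
    rw [e, rr, wA_append, wA_fi]
    cases x
    · exact ⟨C, [A, B, A] ++ ap fi s, by simp [fi], by simp at h2; simp [h2, wA]⟩
    · exact ⟨A, [B, A] ++ ap fi s, by simp [fi], by simp at h2; simp [h2, wA]⟩
    · exact ⟨A, [A, B, A] ++ ap fi s, by simp [fi], by simp at h2; simp [h2, wA]⟩

lemma dd_next (n : ℕ) : dd n ++ [pr (dd n)] <+: dd (n+1) := by
  obtain ⟨x, s, h1, h2⟩ := rr_next n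
  rw [pr_dd, ← h2]
  unfold dd
  rw [h1]
  cases x
  · exact ⟨ap ti s, by simp [ti]⟩
  · exact ⟨[true, true, true] ++ ap ti s, by simp [ti]⟩
  · exact ⟨[true, false, true, true, true] ++ ap ti s, by simp [ti]⟩

lemma rr_even : ∀ n, n % 2 = 0 → rr (n+1) = rr n ++ [if n % 4 = 0 then A else C] ++ rr n
  | 0, _ => rfl
  | 1, h => by simp at h
  | n+2, h => by
    have ih := rr_even n (by omega)
    rw [show n+2+1 = (n+1)+2 from rfl, rr, ih, rr]
    by_cases h4 : n % 4 = 0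
    · rw [if_pos h4, if_neg (by omega)]; simp [fi]
    · rw [if_neg h4, if_pos (by omega)]; simp [fi]

lemma rr_odd (k : ℕ) : ∃ h, rr (2*k+3) = rr (2*k) ++ h ∧ rr (2*k+4) = rr (2*k+3) ++ h := by
  induction k with
  | zero => exact ⟨rr 3, rfl, rfl⟩
  | succ k ih =>
    obtain ⟨h, h1, h2⟩ := ih
    refine ⟨ap fi h, ?_, ?_⟩
    · show rr ((2*k+3)+2) = rr (2*k+2) ++ _
      rw [rr, h1, rr]; simp
    · show rr ((2*k+4)+2) = rr ((2*k+3)+2) ++ _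
      rw [rr, h2, ap_append, ← List.append_assoc]; rfl

lemma dd_len0 {n} (h : n % 4 = 0) : (dd (n+1)).length + 2 = 2 * (dd n).length := by
  unfold dd; rw [rr_even n (by omega), if_pos h]; simp [ti]; omega

lemma dd_len2 {n} (h : n % 4 = 2) : (dd (n+1)).length = 2 * (dd n).length + 3 := by
  unfold dd; rw [rr_even n (by omega), if_neg (by omega)]; simp [ti]; omega

lemma dd_lenodd (k) : (dd (2*k+4)).length + (dd (2*k)).length = 2 * (dd (2*k+3)).length := by
  obtain ⟨h, h1, h2⟩ := rr_odd k
  unfold dd; rw [h2, h1]; simp; omega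

lemma Coding.palpre {Γ : Type} (K : Coding Γ) {z : List Γ} {W} (hz : z <+: K.m ++ ap K.t W) (hp : z.reverse = z)
    (hl : K.m.length ≤ z.length) : ∃ W1, W1 <+: W ∧ W1.reverse = W1 ∧ z = K.m ++ ap K.t W1 := by
  obtain ⟨r, rfl⟩ := List.prefix_of_prefix_length_le (List.prefix_append _ _) hz hl
  have e : K.m ++ r = r.reverse ++ K.m := by rw [← hp]; simp [K.mrev]
  obtain ⟨β, hβ⟩ := hz
  rw [e] at hβ
  obtain ⟨W1, W2, h1, h2, h3⟩ := K.sync hβ.symm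
  rw [← e] at h2
  refine ⟨W1, ⟨W2, h1.symm⟩, ?_, h2⟩
  rw [h2, K.rev_m_ap] at hp
  have hp := List.append_cancel_left hp
  obtain ⟨W', h4, h5⟩ := K.code (δ := []) (by simpa using hp)
  cases W' with
  | nil => simpa using h4
  | cons c W' => simp [K.ne] at h5

lemma rr_pal : ∀ n z, z <+: rr n → z.reverse = z → ∃ j ≤ n, z = rr j
  | 0, z, h, _ => ⟨0, le_rfl, by simpa [rr] using h⟩
  | 1, z, h, _ => by
    rw [rr, List.prefix_cons_iff] at h
    rcases h with rfl | ⟨t, rfl, h⟩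
    · exact ⟨0, by simp, rfl⟩
    · exact ⟨1, by simp, by simp at h; simp [h, rr]⟩
  | n+2, z, h, hp => by
    by_cases hl : 3 ≤ z.length
    · obtain ⟨W1, h1, h2, h3⟩ := cphi.palpre (W := rr n) h hp hl
      obtain ⟨j, hj, rfl⟩ := rr_pal n W1 h1 h2
      exact ⟨j+2, by omega, h3⟩
    · rw [rr] at h
      match z, hl, hp, h with
      | [], _, _, _ => exact ⟨0, by simp, rfl⟩
      | [a], _, _, h => exact ⟨1, by simp, by simp at h; simp [h, rr]⟩
      | [a, b], _, hp, h => simp at h hp; simp [h] at hp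
      | _ :: _ :: _ :: _, hl, _, _ => simp at hl

lemma dd_pal {n z} (h : z <+: dd n) (hp : z.reverse = z) :
    z = [] ∨ z = [true] ∨ z = [true, true] ∨ ∃ j ≤ n, z = dd j := by
  by_cases hl : 3 ≤ z.length
  · obtain ⟨W1, h1, h2, h3⟩ := cd.palpre (W := rr n) h hp hl
    obtain ⟨j, hj, rfl⟩ := rr_pal n W1 h1 h2
    exact Or.inr (Or.inr (Or.inr ⟨j, hj, h3⟩))
  · unfold dd at h
    match z, hl, h with
    | [], _, _ => simp
    | [a], _, h => simp at h; simp [h]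
    | [a, b], _, h => simp at h; simp [h]
    | _ :: _ :: _ :: _, hl, _ => simp at hl

lemma split_pal {l p : List Bool} (hl : l.reverse = l) (hp : p <+: l) :
    2 * p.length + 1 ≤ l.length ∨ ∃ s z, p = s ++ z ∧ z.reverse = z ∧ pr z = pr l ∧
      l.length + z.length = 2 * p.length := by
  by_cases h : 2 * p.length + 1 ≤ l.length
  · exact Or.inl h
  right
  obtain ⟨t, rfl⟩ := hp
  simp at h
  rw [List.reverse_append] at hl
  have h1 : t.reverse <+: p := by
    apply List.prefix_of_prefix_length_le (l₃ := p ++ t) ⟨_, hl⟩ (List.prefix_append _ _); simp; omega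
  obtain ⟨z, rfl⟩ := h1
  simp at hl
  refine ⟨t.reverse, z, rfl, hl, ?_, ?_⟩
  · rw [pr_append, pr_append, pr_reverse]; cases pr t <;> cases pr z <;> rfl
  · simp; omega

lemma bound {n : ℕ} {l : List Bool} (hl : l.reverse = l) (hp : dd n ++ [pr (dd n)] <+: l) :
    2 * (dd n).length + 3 ≤ l.length ∨ ∃ z : List Bool, pr z = pr l ∧
      l.length + z.length = 2 * (dd n).length + 2 ∧
      (z = [] ∨ z = [pr (dd n)] ∨ (z.length ≤ 4 ∧ pr (dd n) = true) ∨ 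
        ∃ j < n, pr z = pr (dd j) ∧ z.length = (dd j).length + 2 ∧ pr (dd j) = pr (dd n)) := by
  rcases split_pal hl hp with h | ⟨s, z, h1, h2, h3, h4⟩
  · left; simp at h; omega
  right
  refine ⟨z, h3, by simp at h4; omega, ?_⟩
  generalize hc : pr (dd n) = c at *
  rcases List.eq_nil_or_concat z with rfl | ⟨y, a, rfl⟩
  · simp
  right
  have h5 : dd n = s ++ y ∧ c = a := by
    rw [List.concat_eq_append, ← List.append_assoc] at h1
    have := List.append_inj' h1 rfl
    simpa using this
  obtain ⟨h5, rfl⟩ := h5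
  cases y with
  | nil => simp
  | cons b z =>
    right
    have h6 : c = b ∧ z.reverse = z := by
      simp at h2
      refine ⟨h2.1, ?_⟩
      exact h2.2.1
    obtain ⟨rfl, h7⟩ := h6
    have h8 : dd n = z ++ c :: s.reverse := by
      rw [← dd_rev, h5]; simp [h7]
    have hz : z <+: dd n := ⟨_, h8.symm⟩
    rcases dd_pal hz h7 with rfl | rfl | rfl | ⟨j, hj, rfl⟩
    · left; simp [dd] at h8; simp [h8.1]
    · left; simp [dd] at h8; simp [h8.1]
    · left; simp [dd] at h8; simp [h8.1]
    · right
      have hjn : j < n := by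
        rcases hj.lt_or_eq with h | rfl
        · exact h
        · have := congrArg List.length h8
          simp at this
      refine ⟨j, hjn, ?_, by simp, ?_⟩
      · simp [pr, pr_append]; cases c <;> simp
      · have h9 := (dd_next j).trans (dd_mono (show j + 1 ≤ n from hjn))
        rw [h8] at h9
        simpa using h9

lemma wp_dd (n : ℕ) : wp (n+2) = itg true (dd n) := by
  induction n with
  | zero => exact wp_two
  | succ n ih =>
    have h4 : n % 4 = 0 ∨ n % 4 = 1 ∨ n % 4 = 2 ∨ n % 4 = 3 := by omega
    have hlen : (dd (n+1)).length ≤ 2 * (dd n).length + 3 := by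
      rcases h4 with h | h | h | h
      · have := dd_len0 h; omega
      · rcases Nat.lt_or_ge n 3 with h' | h'
        · have : n = 1 := by omega
          subst this; decide
        · have := dd_lenodd ((n-3)/2)
          rw [show 2*((n-3)/2)+4 = n+1 by omega, show 2*((n-3)/2)+3 = n by omega] at this; omega
      · have := dd_len2 h; omega
      · have := dd_lenodd ((n-3)/2)
        rw [show 2*((n-3)/2)+4 = n+1 by omega, show 2*((n-3)/2)+3 = n by omega] at this; omega
    refine wp_step ih rfl (dd_rev _) ?_ (dd_next n) hlen ?_
    · rw [pr_dd']
      rcases h4 with h | h | h | h <;> simp [Nat.add_mod, h]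
    · intro l h1 h2 h3
      rcases bound h1 h3 with hb | ⟨z, hz1, hz2, hz3⟩
      · omega
      rw [h2] at hz1
      have odd : n % 2 = 1 → (dd (n+1)).length ≤ l.length := by
        intro ho
        rcases Nat.lt_or_ge n 3 with h' | h'
        · have : n = 1 := by omega
          subst this
          have e1 : (dd 2).length = 9 := by decide
          have e2 : (dd 1).length = 4 := by decide
          rcases hz3 with rfl | rfl | ⟨hz, hz'⟩ | ⟨j, hj, hz3, hz4, hz5⟩
          · simp at hz2; simp; omega
          · simp at hz2; simp; omega
          · exact absurd hz' (by decide)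
          · have : j = 0 := by omega
            subst this
            exact absurd hz5 (by decide)
        · have := dd_lenodd ((n-3)/2)
          rw [show 2*((n-3)/2)+4 = n+1 by omega, show 2*((n-3)/2)+3 = n by omega,
            show 2*((n-3)/2) = n-3 by omega] at this
          have h3' : 3 ≤ (dd (n-3)).length := by simp [dd]
          rcases hz3 with rfl | rfl | ⟨hz, hz'⟩ | ⟨j, hj, hz3, hz4, hz5⟩
          · simp at hz2; omega
          · simp at hz2; omega
          · omega
          · rw [pr_dd', pr_dd', decide_eq_decide] at hz5
            have : (dd j).length ≤ (dd (n-3)).length := (dd_mono (by omega)).length_le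
            omega
      have h0 := pr_dd' n
      have h1' := pr_dd' (n+1)
      rcases h4 with h | h | h | h
      · rw [h] at h0
        rw [show (n+1) % 4 = 1 by omega] at h1'
        simp at h0 h1'
        have := dd_len0 h
        rw [h0] at hz3
        rw [h1'] at hz1
        rcases hz3 with rfl | rfl | ⟨hz, hz'⟩ | ⟨j, hj, hz3, hz4, hz5⟩
        · simp at hz2; omega
        · simp [pr] at hz1
        · omega
        · rw [hz3, hz5] at hz1; simp at hz1
      · exact odd (by omega)
      · rw [h] at h0
        rw [show (n+1) % 4 = 3 by omega] at h1'
        simp at h0 h1'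
        rw [h0] at hz3
        rw [h1'] at hz1
        rcases hz3 with rfl | rfl | ⟨hz, hz'⟩ | ⟨j, hj, hz3, hz4, hz5⟩
        · simp [pr] at hz1
        · simp [pr] at hz1
        · simp at hz'
        · rw [hz3, hz5] at hz1; simp at hz1
      · exact odd (by omega)

lemma suf_itg {a l} : ∀ {m b}, itg a l <:+ itg b m → l <:+ m
  | [], b, h => by
    have := h.length_le
    rw [itg_len, itg_len] at this
    have : l = [] := List.eq_nil_of_length_eq_zero (by simpa using this)
    rw [this]
  | c :: m, b, h => by
    rw [itg, List.suffix_cons_iff] at h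
    rcases h with h | h
    · have h' : itg a l = itg b (c :: m) := h
      rw [(itg_inj h').2]
    · exact (suf_itg h).trans (List.suffix_cons _ _)

lemma inf_itg {a l b m} (h : itg a l <:+: itg b m) : l <:+: m := by
  obtain ⟨t, h1, h2⟩ := List.infix_iff_prefix_suffix.1 h
  obtain ⟨l', rfl, h3⟩ := pre_itg h1
  exact h3.isInfix.trans (suf_itg h2).isInfix

lemma itg_suf (b : Bool) (P l : List Bool) : itg (xor b (pr P)) l <:+ itg b (P ++ l) := by
  induction P generalizing b with
  | nil => simp [pr]
  | cons c P ih =>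
    have := ih (xor b c)
    simp only [pr, List.cons_append, itg]
    rw [← Bool.xor_assoc]
    exact this.trans (List.suffix_cons _ _)

lemma wp_pre {a b : ℕ} (h : a ≤ b) : wp (a+2) <+: wp (b+2) := by
  rw [wp_dd, wp_dd]
  obtain ⟨s, hs⟩ := dd_mono h
  rw [← hs]; exact itg_append _ _ _

lemma fac_rev {n v} (h : v <:+: wp (n+2)) : v.reverse <:+: wp (4*n+1+2) := by
  have h1 : IsPal (wp (4*n+1+2)) := by
    rw [wp_dd, isPal_itg, pr_dd']
    refine ⟨dd_rev _, ?_⟩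
    simp
  have h2 := h.trans (wp_pre (show n ≤ 4*n+1 by omega)).isInfix
  rw [← h1]
  exact List.reverse_infix.2 h2

lemma fac_E {n v} (h : v <:+: wp (n+2)) : Ebar v <:+: wp (4*n+2) := by
  have h1 : IsEPal (wp (4*n+2)) := by
    rw [wp_dd, isEPal_itg, pr_dd']
    refine ⟨dd_rev _, ?_⟩
    simp
  have h2 := h.trans (wp_pre (show n ≤ 4*n by omega)).isInfix
  rw [← h1]
  exact List.reverse_infix.2 (h2.map _)

lemma fac_not {n v} (h : v <:+: wp (n+2)) : FactorUp (v.map Bool.not) := by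
  have := fac_rev (fac_E h)
  exact ⟨_, by simpa [Ebar] using this⟩

lemma factor_iff (a l) : FactorUp (itg a l) ↔ cd.L l := by
  constructor
  · rintro ⟨n, h⟩
    match n, h with
    | 0, h =>
      have := h.length_le
      rw [itg_len] at this; simp [wp] at this
    | 1, h =>
      rw [wp_one] at h
      exact ⟨0, (inf_itg h).trans ⟨[], [true, true], rfl⟩⟩
    | n+2, h =>
      rw [wp_dd] at h
      exact ⟨n, inf_itg h⟩
  · rintro ⟨k, P, Q, h⟩
    have h1 : itg (xor true (pr P)) l <:+: wp (k+2) := by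
      rw [wp_dd]
      have : dd k = P ++ l ++ Q := h.symm
      rw [this]
      exact (itg_suf true P l).isInfix.trans (itg_append _ _ _).isInfix
    by_cases ha : a = xor true (pr P)
    · rw [ha]; exact ⟨_, h1⟩
    · have := fac_not h1
      rw [itg_not] at this
      have e : a = !(xor true (pr P)) := by
        revert ha; generalize pr P = q; revert a q; decide
      rw [e]; exact this

lemma Cp_succ (n : ℕ) : (Cp (n+1) : ℤ) = 2 * sumL n (pz cd.L) := by
  classical
  unfold Cp
  rw [ncard_sumL, ← sumL_dif]
  have key : ∀ v : List Bool, v.length = n+1 → (FactorUp v ↔ cd.L (dif v)) := by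
    intro v hv
    cases v with
    | nil => simp at hv
    | cons a v => rw [← itg_dif a v, factor_iff, dif_itg]
  apply le_antisymm <;> apply sumL_mono <;> intro v hv <;> simp only [pz, key v hv] <;>
    split_ifs <;> simp

lemma Cp_zero : (Cp 0 : ℤ) = 1 := by
  classical
  unfold Cp
  rw [ncard_sumL]
  have : FactorUp [] := ⟨0, List.nil_infix⟩
  simp [sumL, this]

lemma len_wp (n : ℕ) : (wp (n+2)).length = (dd n).length + 1 := by
  rw [wp_dd, itg_len]

def zz (k : ℕ) : List Bool := [true, true, true] ++ ap ti (ZZ k)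

lemma ZZ_weight (k : ℕ) : ∀ g : T3 → ℕ, ((ZZ k).map g).sum + 2 * ((rr (2*k)).map g).sum =
    ((rr (2*k+3)).map g).sum + 2 * ((rr (2*k+1)).map g).sum := by
  induction k with
  | zero => intro g; simp [ZZ, rr, fi]; ring
  | succ k ih =>
    intro g
    have hg : ∀ W, ((ap fi W).map g).sum = (W.map (fun c => ((fi c).map g).sum)).sum := by
      intro W
      induction W with
      | nil => rfl
      | cons c W ih => simp [ih]
    have := ih (fun c => ((fi c).map g).sum)
    rw [← hg, ← hg, ← hg, ← hg] at this
    have e1 : rr (2*(k+1)) = [A, B, A] ++ ap fi (rr (2*k)) := rfl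
    have e2 : rr (2*(k+1)+3) = [A, B, A] ++ ap fi (rr (2*k+3)) := rfl
    have e3 : rr (2*(k+1)+1) = [A, B, A] ++ ap fi (rr (2*k+1)) := rfl
    have e4 : ZZ (k+1) = [A, B, A] ++ ap fi (ZZ k) := rfl
    rw [e1, e2, e3, e4]
    simp only [List.map_append, List.sum_append]
    omega

lemma zz_len (k : ℕ) : (zz k).length + 2 * (dd (2*k)).length =
    (dd (2*k+3)).length + 2 * (dd (2*k+1)).length := by
  have h := ZZ_weight k (fun c => (ti c).length)
  have hg : ∀ W, (ap ti W).length = (W.map (fun c => (ti c).length)).sum := by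
    intro W
    induction W with
    | nil => rfl
    | cons c W ih => simp [ih]
  rw [← hg, ← hg, ← hg, ← hg] at h
  unfold zz dd
  simp only [List.length_append]
  simp only [List.length_cons, List.length_nil]
  omega

lemma zz_gt (k : ℕ) : (dd (2*k+3)).length < (zz k).length := by
  have := zz_len k
  have := dd_len_lt (2*k)
  omega

lemma zz_lt (k : ℕ) : (zz k).length < (dd (2*k+5)).length := by
  have h1 := zz_len k
  have h2 := dd_lenodd k
  have h3 : 2 * (dd (2*k+4)).length ≤ (dd (2*k+5)).length + 2 := by
    by_cases h : (2*k+4) % 4 = 0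
    · have : (dd (2*k+5)).length + 2 = _ := dd_len0 h
      omega
    · have : (dd (2*k+5)).length = _ := dd_len2 (n := 2*k+4) (by omega)
      omega
  have h4 : (dd (2*k+1)).length < (dd (2*k+2)).length := dd_len_lt (2*k+1)
  have h5 : (dd (2*k+2)).length < (dd (2*k+3)).length := dd_len_lt (2*k+2)
  have h6 : 3 ≤ (dd (2*k+1)).length := by simp [dd]
  omega

lemma zz_strict : StrictMono (fun k => (zz k).length) := by
  apply strictMono_nat_of_lt_succ
  intro k
  exact (zz_lt k).trans (zz_gt (k+1))

lemma zz_ne (k i : ℕ) : (zz k).length ≠ (dd (2*i+1)).length := by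
  rcases Nat.lt_or_ge i (k+2) with h | h
  · have h1 : (dd (2*i+1)).length ≤ (dd (2*k+3)).length := dd_strict.monotone (by omega)
    have := zz_gt k
    omega
  · have h1 : (dd (2*k+5)).length ≤ (dd (2*i+1)).length := dd_strict.monotone (by omega)
    have := zz_lt k
    omega

def y8 : List Bool := [true, false, true, true, true, true, false, true]

lemma weak_cases {v} (h : Weak cd.L id v) : v = y8 ∨ ∃ k, v = zz k := weak_d h

lemma zz_8 (k : ℕ) : 8 < (zz k).length := by
  have := zz_gt k
  have h1 : (dd 3).length ≤ (dd (2*k+3)).length := dd_strict.monotone (by omega)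
  have h2 : (dd 3).length = 21 := by decide
  omega

lemma d8_ne (i : ℕ) : (dd (2*i+1)).length ≠ 8 := by
  rcases i with _ | i
  · decide
  · have h1 : (dd 3).length ≤ (dd (2*(i+1)+1)).length := dd_strict.monotone (by omega)
    have h2 : (dd 3).length = 21 := by decide
    omega

lemma weak_unique {v w} (hv : Weak cd.L id v) (hw : Weak cd.L id w) (h : v.length = w.length) :
    v = w := by
  have e8 : y8.length = 8 := rfl
  rcases weak_cases hv with rfl | ⟨k, rfl⟩ <;> rcases weak_cases hw with rfl | ⟨j, rfl⟩
  · rfl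
  · have := zz_8 j; omega
  · have := zz_8 k; omega
  · rw [zz_strict.injective h]

lemma weak_ne {v i} (hv : Weak cd.L id v) : v.length ≠ (dd (2*i+1)).length := by
  rcases weak_cases hv with rfl | ⟨k, rfl⟩
  · exact (d8_ne i).symm
  · exact zz_ne k i

lemma sOdd_len (k : ℕ) (hk : 2 ≤ k) : (sOdd k).length + 2 * (wp (2*k-4)).length =
    2 * (wp (2*k-3)).length + (wp (2*k-1)).length := by
  have hmono : ∀ a b, a ≤ b → (wp a).length ≤ (wp b).length := by
    intro a b h
    match a, b, h with
    | 0, b, _ => simp [wp]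
    | 1, 1, _ => exact le_rfl
    | 1, b+2, _ => rw [len_wp, wp_one]; simp [itg, dd]
    | a+2, b+2, h => exact (wp_pre (by omega)).length_le
  unfold sOdd
  split_ifs with h
  · have e1 : 4*(k/2)-3 = 2*k-3 := by omega
    have e2 : 4*(k/2)-1 = 2*k-1 := by omega
    have e3 : 4*(k/2)-4 = 2*k-4 := by omega
    rw [s1, e1, e2, e3]
    have := hmono (2*k-4) (2*k-3) (by omega)
    have := hmono (2*k-4) (2*k-1) (by omega)
    simp; omega
  · have e1 : 4*(k/2)-1 = 2*k-3 := by omega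
    have e2 : 4*(k/2)+1 = 2*k-1 := by omega
    have e3 : 4*(k/2)-2 = 2*k-4 := by omega
    rw [s3, e1, e2, e3]
    have := hmono (2*k-4) (2*k-3) (by omega)
    have := hmono (2*k-4) (2*k-1) (by omega)
    simp [Ebar]; omega

lemma weak_s {v} (hv : Weak cd.L id v) : ∃ k, 2 ≤ k ∧ v.length + 1 = (sOdd k).length := by
  rcases weak_cases hv with rfl | ⟨k, rfl⟩
  · refine ⟨2, le_rfl, ?_⟩
    have := sOdd_len 2 le_rfl
    have h3 : (wp 3).length = 5 := len_wp 1
    have h1 : (wp 1).length = 2 := by rw [wp_one]; rfl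
    have h0 : (wp 0).length = 0 := by simp [wp]
    simp only [Nat.reduceMul, Nat.reduceSub] at this
    rw [h0, h1, h3] at this
    have e8 : y8.length = 8 := rfl
    omega
  · refine ⟨k+3, by omega, ?_⟩
    have := sOdd_len (k+3) (by omega)
    rw [show 2*(k+3)-4 = 2*k+2 by omega, show 2*(k+3)-3 = (2*k+1)+2 by omega,
      show 2*(k+3)-1 = (2*k+3)+2 by omega, len_wp, len_wp, len_wp] at this
    have := zz_len k
    omega

lemma S_nonneg {m} (h : ∀ v, v.length = m → ¬ Weak cd.L id v) : 0 ≤ sumL m (beta cd.L) := by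
  rw [← sumL_zero m]
  apply sumL_mono
  intro v hv
  exact (beta_cases Ld_right Ld_left v).2.1 (h v hv)

lemma S_neg (m) : -1 ≤ sumL m (beta cd.L) := by
  by_cases h : ∃ v, v.length = m ∧ Weak cd.L id v
  · obtain ⟨v0, rfl, h0⟩ := h
    have e := sumL_single v0 (-1)
    calc _ = _ := e.symm
      _ ≤ _ := by
        apply sumL_mono
        intro v hv
        obtain ⟨h1, h2, _⟩ := beta_cases Ld_right Ld_left v
        split_ifs with hh
        · exact h1
        · exact h2 (fun hw => hh (weak_unique hw h0 hv))
  · have := S_nonneg (m := m) (fun v hv hw => h ⟨v, hv, hw⟩)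
    linarith

lemma S_pos (i) : 1 ≤ sumL (dd (2*i+1)).length (beta cd.L) := by
  have e := sumL_single (dd (2*i+1)) 1
  calc _ = _ := e.symm
    _ ≤ _ := by
      apply sumL_mono
      intro v hv
      obtain ⟨h1, h2, h3⟩ := beta_cases Ld_right Ld_left v
      split_ifs with hh
      · subst hh; exact h3 (strong_d i)
      · exact h2 (fun hw => weak_ne hw hv)

lemma D2 (m : ℕ) : (Cp (m+1+2) : ℤ) - 2 * Cp (m+1+1) + Cp (m+1) = 2 * sumL m (beta cd.L) := by
  rw [← second_diff, Cp_succ, Cp_succ, Cp_succ]; ring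

lemma D20 : (Cp (0+2) : ℤ) - 2 * Cp (0+1) + Cp 0 = 1 := by
  have h0 : cd.L [] := ⟨0, List.nil_infix⟩
  have h1 : cd.L [true] := ⟨0, [], [true, true], rfl⟩
  have h2 : cd.L [false] := ⟨2, by decide⟩
  rw [show 0+2 = 1+1 from rfl, Cp_succ, Cp_succ, Cp_zero]
  simp [sumL, pz, h0, h1, h2]

/-- bounds on the second difference of the factor complexity of `u_p`. -/
theorem second_difference_complexity_bounds (n : ℕ) :
    ((∃ k : ℕ, 1 ≤ k ∧ n = (wp (2*k+1)).length) →
      (Cp (n+2) : ℤ) - 2 * Cp (n+1) + Cp n ≥ 2) ∧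
    ((∃ k : ℕ, 2 ≤ k ∧ n = (sOdd k).length) →
      (Cp (n+2) : ℤ) - 2 * Cp (n+1) + Cp n ≥ -2) ∧
    ((¬ ∃ k : ℕ, 1 ≤ k ∧ n = (wp (2*k+1)).length) →
      (¬ ∃ k : ℕ, 2 ≤ k ∧ n = (sOdd k).length) →
      (Cp (n+2) : ℤ) - 2 * Cp (n+1) + Cp n ≥ 0) := by
  cases n with
  | zero =>
    rw [D20]
    refine ⟨?_, by intro; norm_num, by intros; norm_num⟩
    rintro ⟨k, hk, h⟩
    rw [show 2*k+1 = (2*k-1)+2 by omega, len_wp] at h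
    omega
  | succ m =>
    rw [D2]
    refine ⟨?_, ?_, ?_⟩
    · rintro ⟨k, hk, h⟩
      rw [show 2*k+1 = (2*(k-1)+1)+2 by omega, len_wp] at h
      have h' : m = (dd (2*(k-1)+1)).length := by omega
      have := S_pos (k-1)
      rw [h']; linarith
    · intro _
      have := S_neg m
      linarith
    · intro _ h2
      have := S_nonneg (m := m) (fun v hv hw => by
        obtain ⟨k, hk, e⟩ := weak_s hw
        exact h2 ⟨k, hk, by omega⟩)
      linarith
end
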